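/- arXiv:1104.1209 — 5 statements merged into one kernel-verified Lean document; each statement's English description precedes it below -/
import Mathlib

section
/- There exist absolute constants c₀ > 0 and C > 0 such that the following holds. Let ε > 0 and 0 < θ ≤ c₀·ε, let p be a polynomial of degree at most d on ℝ^n, and let X, Y, Z be independent standard n-dimensional Gaussian vectors. Then Pr_{X,Y,Z}( |p(X)| < ε · |D^θ_{Y,Z} p(X)| ) ≤ C · d² · ε. -/
open MeasureTheory ProbabilityTheory

/-- The standard Gaussian measure on `ℝ^n`. -/
noncomputable def stdGaussian (n : ℕ) : Measure (Fin n → ℝ) :=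
  Measure.pi fun _ => gaussianReal 0 1

/-- `N_Y^θ(X) = cos θ · X + sin θ · Y`. -/
noncomputable def noisy {n : ℕ} (θ : ℝ) (Y X : Fin n → ℝ) : Fin n → ℝ :=
  Real.cos θ • X + Real.sin θ • Y

/-- The noisy derivative `D_{Y,Z}^θ f (X)`. -/
noncomputable def noisyDeriv {n : ℕ} (θ : ℝ) (Y Z : Fin n → ℝ)
    (f : (Fin n → ℝ) → ℝ) (X : Fin n → ℝ) : ℝ :=
  (f (noisy θ Y X) - f (noisy θ Z X)) / θ

/-- `|f_θ^{(ℓ)}(X)|₂²`, the mean square of the `ℓ`-fold noisy derivative over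
independent standard Gaussian directions. -/
noncomputable def derivNormSq (n : ℕ) (θ : ℝ) : ℕ → ((Fin n → ℝ) → ℝ) → (Fin n → ℝ) → ℝ
  | 0, f, X => (f X) ^ 2
  | (ℓ+1), f, X =>
      ∫ YZ : (Fin n → ℝ) × (Fin n → ℝ),
        derivNormSq n θ ℓ (noisyDeriv θ YZ.1 YZ.2 f) X
        ∂((stdGaussian n).prod (stdGaussian n))

/-- The averaging operator `A^θ f (X) = E_Y[f(N_Y^θ(X))]`. -/
noncomputable def avgOp (n : ℕ) (θ : ℝ) (f : (Fin n → ℝ) → ℝ) (X : Fin n → ℝ) : ℝ :=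
  ∫ Y, f (noisy θ Y X) ∂(stdGaussian n)

/-- `q_{ℓ,m}(X) = |p_θ^{(ℓ),m}(X)|₂² = (A^θ)^m |p_θ^{(ℓ)}(X)|₂²`. -/
noncomputable def qlm (n : ℕ) (θ : ℝ) (p : MvPolynomial (Fin n) ℝ) (ℓ m : ℕ)
    (X : Fin n → ℝ) : ℝ :=
  (avgOp n θ)^[m] (derivNormSq n θ ℓ (fun W => MvPolynomial.eval W p)) X

/-- The Gaussian `L^k` norm of a function on `ℝ^n`. -/
noncomputable def gaussNorm (n : ℕ) (k : ℝ) (p : (Fin n → ℝ) → ℝ) : ℝ :=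
  (∫ X, |p X| ^ k ∂(stdGaussian n)) ^ (1 / k)

/-- `f` is a degree-`d` polynomial threshold function on `ℝ^n`. -/
def isPTF (n d : ℕ) (f : (Fin n → ℝ) → ℝ) : Prop :=
  ∃ p : MvPolynomial (Fin n) ℝ, p.totalDegree ≤ d ∧
    ∀ x, f x = Real.sign (MvPolynomial.eval x p)

/-- `X` is a `k`-independent family of standard Gaussians: any `m ≤ k` distinct
coordinates are jointly distributed as `m` independent standard Gaussians. -/
def kIndepGaussian {Ω : Type} [MeasurableSpace Ω] (n k : ℕ) (P : Measure Ω)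
    (X : Ω → (Fin n → ℝ)) : Prop :=
  ∀ m : ℕ, m ≤ k → ∀ ι : Fin m → Fin n, Function.Injective ι →
    Measure.map (fun ω i => X ω (ι i)) P = Measure.pi fun _ : Fin m => gaussianReal 0 1

lemma gauss_rotation (n : ℕ) (φ : ℝ) :
    ((_root_.stdGaussian n).prod (_root_.stdGaussian n)).map (ContinuousLinearMap.rotation φ) =
      (_root_.stdGaussian n).prod (_root_.stdGaussian n) := by
  have hmap : _root_.stdGaussian n =
      (ProbabilityTheory.stdGaussian (EuclideanSpace ℝ (Fin n))).map
        (EuclideanSpace.equiv (Fin n) ℝ) := by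
    rw [← map_pi_eq_stdGaussian, Measure.map_map (by fun_prop) (by fun_prop)]
    have : (⇑(EuclideanSpace.equiv (Fin n) ℝ) ∘ (WithLp.toLp 2)) = (id : (Fin n → ℝ) → _) := by
      ext x; rfl
    rw [this, Measure.map_id]
    rfl
  have hG : IsGaussian (_root_.stdGaussian n) := by
    rw [hmap]; infer_instance
  refine IsGaussian.map_rotation_eq_self_of_forall_strongDual_eq_zero ?_ φ
  intro L
  rw [hmap, integral_map (by fun_prop) (by fun_prop)]
  exact integral_strongDual_stdGaussian
    (L.comp (EuclideanSpace.equiv (Fin n) ℝ : EuclideanSpace ℝ (Fin n) →L[ℝ] (Fin n → ℝ)))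

lemma exists_circle_poly {n d : ℕ} (p : MvPolynomial (Fin n) ℝ) (hp : p.totalDegree ≤ d)
    (X Y : Fin n → ℝ) :
    ∃ Q : Polynomial ℂ, Q.natDegree ≤ 2 * d ∧ ∀ φ : ℝ,
      Q.eval (Complex.exp (Complex.I * φ)) =
        Complex.exp (Complex.I * φ) ^ d *
          ((MvPolynomial.eval (Real.cos φ • X + Real.sin φ • Y) p : ℝ) : ℂ) := by
  let L : Fin n → Polynomial ℂ := fun j =>
    Polynomial.C ((X j : ℂ) / 2) * (Polynomial.X ^ 2 + 1) +
      Polynomial.C ((Y j : ℂ) / (2 * Complex.I)) * (Polynomial.X ^ 2 - 1)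
  have hL : ∀ j, (L j).natDegree ≤ 2 := by
    intro j
    simp only [L]
    compute_degree
  have hLe : ∀ j (φ : ℝ), (L j).eval (Complex.exp (Complex.I * φ)) =
      Complex.exp (Complex.I * φ) * (((Real.cos φ • X + Real.sin φ • Y) j : ℝ) : ℂ) := by
    intro j φ
    have h := Complex.exp_ne_zero (Complex.I * φ)
    simp only [L, Pi.add_apply, Pi.smul_apply, smul_eq_mul, Polynomial.eval_add,
      Polynomial.eval_mul, Polynomial.eval_C, Polynomial.eval_pow, Polynomial.eval_X,
      Polynomial.eval_one, Polynomial.eval_sub]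
    push_cast
    have e : Complex.exp (Complex.I * φ) = Complex.cos φ + Complex.sin φ * Complex.I := by
      rw [mul_comm, Complex.exp_mul_I]
    rw [e]
    have h2 := Complex.sin_sq_add_cos_sq (φ : ℂ)
    have hI := Complex.I_sq
    have hI0 := Complex.I_ne_zero
    set c := Complex.cos φ
    set s := Complex.sin φ
    have hc : (c + s * Complex.I) ^ 2 + 1 = 2 * c * (c + s * Complex.I) := by
      linear_combination (s^2) * hI - h2
    have hs : (c + s * Complex.I) ^ 2 - 1 = 2 * Complex.I * s * (c + s * Complex.I) := by
      linear_combination (-s^2) * hI + h2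
    rw [hc, hs]
    field_simp
  refine ⟨∑ m ∈ p.support, Polynomial.C ((p.coeff m : ℝ) : ℂ) *
    (Polynomial.X ^ (d - ∑ j, m j) * ∏ j, L j ^ m j), ?_, ?_⟩
  · refine Polynomial.natDegree_sum_le_of_forall_le _ _ ?_
    intro m hm
    have hmd : ∑ j, m j ≤ d := by
      have := (MvPolynomial.le_totalDegree hm).trans hp
      rwa [Finsupp.sum_fintype _ _ (by simp)] at this
    refine (Polynomial.natDegree_C_mul_le _ _).trans ?_
    refine Polynomial.natDegree_mul_le.trans ?_
    have h1 : (∏ j, L j ^ m j).natDegree ≤ ∑ j, m j * 2 := by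
      refine (Polynomial.natDegree_prod_le _ _).trans (Finset.sum_le_sum fun j _ => ?_)
      exact Polynomial.natDegree_pow_le_of_le _ (hL j)
    rw [← Finset.sum_mul] at h1
    rw [Polynomial.natDegree_X_pow]
    omega
  · intro φ
    rw [Polynomial.eval_finsetSum, MvPolynomial.eval_eq']
    push_cast
    rw [Finset.mul_sum]
    refine Finset.sum_congr rfl fun m hm => ?_
    have hmd : ∑ j, m j ≤ d := by
      have := (MvPolynomial.le_totalDegree hm).trans hp
      rwa [Finsupp.sum_fintype _ _ (by simp)] at this
    simp only [Polynomial.eval_mul, Polynomial.eval_C, Polynomial.eval_pow, Polynomial.eval_X,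
      Polynomial.eval_prod, hLe, mul_pow, Finset.prod_mul_distrib, Finset.prod_pow_eq_pow_sum]
    have : Complex.exp (Complex.I * φ) ^ d = Complex.exp (Complex.I * φ) ^ (d - ∑ j, m j) *
        Complex.exp (Complex.I * φ) ^ (∑ j, m j) := by
      rw [← pow_add]; congr 1; omega
    rw [this]
    ring

lemma multiset_prod_bound (s : Multiset ℂ) (z z' : ℂ) (t δ : ℝ) (ht : 0 ≤ t)
    (hz : ‖z' - z‖ ≤ t * δ) (hs : ∀ r ∈ s, δ ≤ ‖z - r‖) :
    ‖(s.map (fun r => z' - r)).prod - (s.map (fun r => z - r)).prod‖ ≤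
      ((1 + t) ^ s.card - 1) * ‖(s.map (fun r => z - r)).prod‖ := by
  induction s using Multiset.induction_on with
  | empty => simp
  | cons a s ih =>
    have ih := ih fun r hr => hs r (Multiset.mem_cons_of_mem hr)
    have ha := hs a (Multiset.mem_cons_self a s)
    simp only [Multiset.map_cons, Multiset.prod_cons, Multiset.card_cons, norm_mul]
    set P := (s.map (fun r => z - r)).prod
    set P' := (s.map (fun r => z' - r)).prod
    have e : (z' - a) * P' - (z - a) * P = (z' - a) * (P' - P) + (z' - z) * P := by ring
    have h1 : ‖z' - z‖ ≤ t * ‖z - a‖ := hz.trans (mul_le_mul_of_nonneg_left ha ht)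
    have h2 : ‖z' - a‖ ≤ (1 + t) * ‖z - a‖ := by
      calc ‖z' - a‖ = ‖(z' - z) + (z - a)‖ := by ring_nf
        _ ≤ ‖z' - z‖ + ‖z - a‖ := norm_add_le _ _
        _ ≤ _ := by linarith
    rw [e]
    calc _ ≤ ‖(z' - a) * (P' - P)‖ + ‖(z' - z) * P‖ := norm_add_le _ _
      _ = ‖z' - a‖ * ‖P' - P‖ + ‖z' - z‖ * ‖P‖ := by rw [norm_mul, norm_mul]
      _ ≤ ((1 + t) * ‖z - a‖) * (((1 + t) ^ s.card - 1) * ‖P‖) + (t * ‖z - a‖) * ‖P‖ := by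
        gcongr
      _ = _ := by ring

lemma arc_volume (r : ℂ) (δ : ℝ) (hδ : 0 < δ) :
    volume {φ : ℝ | φ ∈ Set.Icc (0:ℝ) 1 ∧ ‖Complex.exp (Complex.I * φ) - r‖ < δ} ≤
      ENNReal.ofReal (2 * Real.pi * δ / 2) := by
  refine (Real.volume_le_diam _).trans ?_
  refine Metric.ediam_le ?_
  rintro a ⟨ha, ha'⟩ b ⟨hb, hb'⟩
  rw [edist_dist]
  apply ENNReal.ofReal_le_ofReal
  rw [Real.dist_eq]
  have h1 : ‖Complex.exp (Complex.I * a) - Complex.exp (Complex.I * b)‖ ≤ 2 * δ := by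
    calc _ = ‖(Complex.exp (Complex.I * a) - r) - (Complex.exp (Complex.I * b) - r)‖ := by ring_nf
      _ ≤ _ := norm_sub_le _ _
      _ ≤ _ := by linarith
  have h2 : ‖Complex.exp (Complex.I * a) - Complex.exp (Complex.I * b)‖ =
      2 * |Real.sin ((a - b) / 2)| := by
    have : Complex.exp (Complex.I * a) - Complex.exp (Complex.I * b) =
        Complex.exp (Complex.I * b) * (Complex.exp (Complex.I * (a - b : ℝ)) - 1) := by
      rw [mul_sub, ← Complex.exp_add]; push_cast; ring_nf
    rw [this, norm_mul, Complex.norm_exp_I_mul_ofReal_sub_one, mul_comm Complex.I,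
      Complex.norm_exp_ofReal_mul_I]
    simp
  have hab : |a - b| ≤ 1 := by
    rw [abs_le]; constructor <;> linarith [ha.1, ha.2, hb.1, hb.2]
  have h3 := Real.mul_abs_le_abs_sin (x := (a - b) / 2) (by
    rw [abs_div, abs_two]; linarith [Real.pi_gt_three])
  rw [abs_div, abs_two] at h3
  have hpi := Real.pi_pos
  have h4 : 2 / Real.pi * (|a - b| / 2) ≤ δ := by linarith
  have : 2 / Real.pi * (|a - b| / 2) = |a - b| / Real.pi := by ring
  rw [this, div_le_iff₀ hpi] at h4
  linarith

lemma fiber_volume {n d : ℕ} (p : MvPolynomial (Fin n) ℝ) (hp : p.totalDegree ≤ d) (hd : 1 ≤ d)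
    (ε θ : ℝ) (hε : 0 < ε) (hθ : 0 < θ) (hθε : θ ≤ ε) (hdε : d * ε ≤ 1 / 8)
    (X Y : Fin n → ℝ) :
    volume {φ : ℝ | φ ∈ Set.Icc (0:ℝ) 1 ∧
      θ / (2 * ε) * |MvPolynomial.eval (Real.cos φ • X + Real.sin φ • Y) p| <
        |MvPolynomial.eval (Real.cos (φ + θ) • X + Real.sin (φ + θ) • Y) p -
          MvPolynomial.eval (Real.cos φ • X + Real.sin φ • Y) p|} ≤
      ENNReal.ofReal (128 * d ^ 2 * ε) := by
  obtain ⟨Q, hQd, hQ⟩ := exists_circle_poly p hp X Y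
  have hd0 : (1:ℝ) ≤ d := by exact_mod_cast hd
  set δ : ℝ := 16 * d * ε with hδ
  have hδ0 : 0 < δ := by positivity
  have hsub : {φ : ℝ | φ ∈ Set.Icc (0:ℝ) 1 ∧
      θ / (2 * ε) * |MvPolynomial.eval (Real.cos φ • X + Real.sin φ • Y) p| <
        |MvPolynomial.eval (Real.cos (φ + θ) • X + Real.sin (φ + θ) • Y) p -
          MvPolynomial.eval (Real.cos φ • X + Real.sin φ • Y) p|} ⊆
      ⋃ r ∈ Q.roots.toFinset,
        {φ : ℝ | φ ∈ Set.Icc (0:ℝ) 1 ∧ ‖Complex.exp (Complex.I * φ) - r‖ < δ} := by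
    rintro φ ⟨hφ, hlt⟩
    by_contra hcon
    simp only [Set.mem_iUnion, Set.mem_ofPred_eq, not_exists, not_and, not_lt,
      Multiset.mem_toFinset] at hcon
    have hcon' : ∀ r ∈ Q.roots, δ ≤ ‖Complex.exp (Complex.I * φ) - r‖ := fun r hr => hcon r hr hφ
    have q1 := hQ φ
    have q2 := hQ (φ + θ)
    set u := MvPolynomial.eval (Real.cos φ • X + Real.sin φ • Y) p
    set v := MvPolynomial.eval (Real.cos (φ + θ) • X + Real.sin (φ + θ) • Y) p
    set z := Complex.exp (Complex.I * φ)
    set w := Complex.exp (Complex.I * θ)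
    have hzn : ‖z‖ = 1 := by
      simp only [z]; rw [mul_comm, Complex.norm_exp_ofReal_mul_I]
    have hwn : ‖w‖ = 1 := by
      simp only [w]; rw [mul_comm, Complex.norm_exp_ofReal_mul_I]
    have hzw : Complex.exp (Complex.I * ((φ + θ : ℝ) : ℂ)) = w * z := by
      simp only [w, z]; rw [← Complex.exp_add]; push_cast; ring_nf
    rw [hzw] at q2
    have hw1 : ‖w - 1‖ ≤ θ := by
      have := Real.norm_exp_I_mul_ofReal_sub_one_le (x := θ)
      rwa [Real.norm_of_nonneg hθ.le] at this
    have hwd : ‖w ^ d - 1‖ ≤ d * θ := by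
      have := Real.norm_exp_I_mul_ofReal_sub_one_le (x := d * θ)
      rw [Real.norm_of_nonneg (by positivity)] at this
      have e : w ^ d = Complex.exp (Complex.I * ((d * θ : ℝ) : ℂ)) := by
        simp only [w]; rw [← Complex.exp_nat_mul]; push_cast; ring_nf
      rwa [e]
    have hs := IsAlgClosed.splits Q
    have hcard : Q.roots.card ≤ 2 * d := (Polynomial.card_roots' Q).trans hQd
    set t : ℝ := θ / δ with ht
    have ht0 : 0 ≤ t := by positivity
    have hmb := multiset_prod_bound Q.roots z (w * z) t δ ht0 (by
      have : w * z - z = (w - 1) * z := by ring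
      rw [this, norm_mul, hzn, ht, div_mul_cancel₀ _ hδ0.ne']; linarith) hcon'
    have hQ1 : ‖Q.eval (w * z) - Q.eval z‖ ≤ ((1 + t) ^ Q.roots.card - 1) * ‖Q.eval z‖ := by
      rw [hs.eval_eq_prod_roots, hs.eval_eq_prod_roots, ← mul_sub, norm_mul, norm_mul]
      calc _ ≤ ‖Q.leadingCoeff‖ * _ := mul_le_mul_of_nonneg_left hmb (norm_nonneg _)
        _ = _ := by ring
    have hexp : (1 + t) ^ Q.roots.card - 1 ≤ θ / (4 * ε) := by
      have hx : (2 * d : ℕ) * t = θ / (8 * ε) := by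
        rw [ht, hδ]; push_cast; field_simp; norm_num
      have hx1 : θ / (8 * ε) ≤ 1 := by
        rw [div_le_one (by positivity)]; linarith
      have hx0 : 0 ≤ θ / (8 * ε) := by positivity
      have h1 : (1 + t) ^ Q.roots.card ≤ (1 + t) ^ (2 * d) :=
        pow_le_pow_right₀ (by linarith) hcard
      have h2 : (1 + t) ^ (2 * d) ≤ Real.exp (θ / (8 * ε)) := by
        rw [← hx, Real.exp_nat_mul]
        exact pow_le_pow_left₀ (by linarith) (by linarith [Real.add_one_le_exp t]) _
      have h3 := Real.abs_exp_sub_one_le (x := θ / (8 * ε)) (by rwa [abs_of_nonneg hx0])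
      rw [abs_of_nonneg hx0] at h3
      have h4 := le_abs_self (Real.exp (θ / (8 * ε)) - 1)
      have h5 : 2 * (θ / (8 * ε)) = θ / (4 * ε) := by field_simp; norm_num
      linarith
    have hdθ : d * θ ≤ θ / (8 * ε) := by
      rw [le_div_iff₀ (by positivity)]
      nlinarith
    have hnz : ‖Q.eval z‖ = |u| := by
      rw [q1, norm_mul, norm_pow, hzn]; simp
    have hvu : |v - u| = ‖Q.eval (w * z) - w ^ d * Q.eval z‖ := by
      rw [q1, q2]
      have : (w * z) ^ d * (v : ℂ) - w ^ d * (z ^ d * (u : ℂ)) =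
        w ^ d * z ^ d * ((v - u : ℝ) : ℂ) := by push_cast; ring
      rw [this, norm_mul, norm_mul, norm_pow, norm_pow, hzn, hwn, Complex.norm_real, Real.norm_eq_abs]; simp
    have hfin : |v - u| ≤ θ / (2 * ε) * |u| := by
      rw [hvu, ← hnz]
      calc _ = ‖(Q.eval (w * z) - Q.eval z) - (w ^ d - 1) * Q.eval z‖ := by ring_nf
        _ ≤ ‖Q.eval (w * z) - Q.eval z‖ + ‖(w ^ d - 1) * Q.eval z‖ := norm_sub_le _ _
        _ ≤ θ / (4 * ε) * ‖Q.eval z‖ + θ / (8 * ε) * ‖Q.eval z‖ := by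
          rw [norm_mul]
          gcongr
          · exact hQ1.trans (mul_le_mul_of_nonneg_right hexp (norm_nonneg _))
          · exact hwd.trans hdθ
        _ = (3 / 4) * (θ / (2 * ε) * ‖Q.eval z‖) := by field_simp; ring
        _ ≤ _ := by
          have : 0 ≤ θ / (2 * ε) * ‖Q.eval z‖ := by positivity
          linarith
    exact absurd hlt (not_lt.mpr hfin)
  refine (measure_mono hsub).trans ((measure_biUnion_finset_le _ _).trans ?_)
  refine (Finset.sum_le_sum fun r _ => arc_volume r δ hδ0).trans ?_
  rw [Finset.sum_const, nsmul_eq_mul, ← ENNReal.ofReal_natCast,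
    ← ENNReal.ofReal_mul (by positivity)]
  apply ENNReal.ofReal_le_ofReal
  have hc : ((Q.roots.toFinset.card : ℕ) : ℝ) ≤ 2 * d := by
    exact_mod_cast (Multiset.toFinset_card_le _).trans ((Polynomial.card_roots' Q).trans hQd)
  have hpi := Real.pi_le_four
  calc _ ≤ (2 * d : ℝ) * (2 * 4 * δ / 2) := by gcongr
    _ = _ := by rw [hδ]; ring

instance (n : ℕ) : IsProbabilityMeasure (_root_.stdGaussian n) := by
  unfold _root_.stdGaussian; infer_instance

lemma pair_bound {n d : ℕ} (p : MvPolynomial (Fin n) ℝ) (hp : p.totalDegree ≤ d) (hd : 1 ≤ d)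
    (ε θ : ℝ) (hε : 0 < ε) (hθ : 0 < θ) (hθε : θ ≤ ε) (hdε : d * ε ≤ 1 / 8) :
    ((_root_.stdGaussian n).prod (_root_.stdGaussian n))
      {W | θ / (2 * ε) * |MvPolynomial.eval W.1 p| <
        |MvPolynomial.eval (noisy θ W.2 W.1) p - MvPolynomial.eval W.1 p|} ≤
      ENNReal.ofReal (128 * d ^ 2 * ε) := by
  set μ := (_root_.stdGaussian n).prod (_root_.stdGaussian n) with hμ
  set B : Set ((Fin n → ℝ) × (Fin n → ℝ)) := {W | θ / (2 * ε) * |MvPolynomial.eval W.1 p| <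
        |MvPolynomial.eval (noisy θ W.2 W.1) p - MvPolynomial.eval W.1 p|} with hB
  have hc := MvPolynomial.continuous_eval p
  have hcn : Continuous fun W : (Fin n → ℝ) × (Fin n → ℝ) => noisy θ W.2 W.1 := by
    unfold noisy; fun_prop
  have hBo : IsOpen B := isOpen_lt
    (continuous_const.mul (hc.comp continuous_fst).abs)
    ((hc.comp hcn).sub (hc.comp continuous_fst)).abs
  let R : ℝ × ((Fin n → ℝ) × (Fin n → ℝ)) → (Fin n → ℝ) × (Fin n → ℝ) := fun q =>
    (Real.cos q.1 • q.2.1 + Real.sin q.1 • q.2.2, -Real.sin q.1 • q.2.1 + Real.cos q.1 • q.2.2)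
  have hR : Continuous R := by fun_prop
  have hS : MeasurableSet (R ⁻¹' B) := (hBo.preimage hR).measurableSet
  set ν := (volume : Measure ℝ).restrict (Set.Icc (0:ℝ) 1) with hν
  have hν1 : ν Set.univ = 1 := by simp [hν]
  have h1 : (ν.prod μ) (R ⁻¹' B) = μ B := by
    rw [Measure.prod_apply hS]
    have : ∀ φ : ℝ, μ (Prod.mk φ ⁻¹' (R ⁻¹' B)) = μ B := by
      intro φ
      conv_rhs => rw [hμ, ← gauss_rotation n φ, Measure.map_apply (by fun_prop) hBo.measurableSet]
      rfl
    simp only [this, lintegral_const, hν1, mul_one]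
  have h2 : (ν.prod μ) (R ⁻¹' B) ≤ ENNReal.ofReal (128 * d ^ 2 * ε) := by
    rw [Measure.prod_apply_symm hS]
    refine (lintegral_mono (g := fun _ => ENNReal.ofReal (128 * d ^ 2 * ε)) ?_).trans ?_
    · rintro ⟨X, Y⟩
      refine le_trans ?_ (fiber_volume p hp hd ε θ hε hθ hθε hdε X Y)
      rw [hν]
      beta_reduce
      rw [Measure.restrict_apply (hS.preimage (by fun_prop))]
      refine measure_mono ?_
      rintro φ ⟨hφ, hI⟩
      refine ⟨hI, ?_⟩
      have h : θ / (2 * ε) * |MvPolynomial.eval (Real.cos φ • X + Real.sin φ • Y) p| <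
        |MvPolynomial.eval (noisy θ (-Real.sin φ • X + Real.cos φ • Y)
          (Real.cos φ • X + Real.sin φ • Y)) p -
            MvPolynomial.eval (Real.cos φ • X + Real.sin φ • Y) p| := hφ
      have e : noisy θ (-Real.sin φ • X + Real.cos φ • Y) (Real.cos φ • X + Real.sin φ • Y) =
          Real.cos (φ + θ) • X + Real.sin (φ + θ) • Y := by
        ext i
        simp only [noisy, Pi.add_apply, Pi.smul_apply, smul_eq_mul, Real.cos_add, Real.sin_add]
        ring
      rwa [e] at h
    · simp
  rwa [h1] at h2

/-- A polynomial is rarely much smaller than its noisy derivative: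
`Pr(|p(X)| < ε |D^θ_{Y,Z} p(X)|) = O(d² ε)`. -/
theorem stmt8 :
    ∃ c₀ > (0:ℝ), ∃ C > (0:ℝ),
      ∀ (n d : ℕ) (p : MvPolynomial (Fin n) ℝ), p.totalDegree ≤ d →
        ∀ ε θ : ℝ, 0 < ε → 0 < θ → θ ≤ c₀ * ε →
          (((stdGaussian n).prod ((stdGaussian n).prod (stdGaussian n)))
            {W | |MvPolynomial.eval W.1 p| <
                  ε * |noisyDeriv θ W.2.1 W.2.2
                        (fun V => MvPolynomial.eval V p) W.1|}).toReal ≤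
            C * (d : ℝ) ^ 2 * ε := by
  refine ⟨1, one_pos, 512, by norm_num, ?_⟩
  intro n d p hp ε θ hε hθ hθε
  rw [one_mul] at hθε
  set γ := _root_.stdGaussian n with hγ
  rcases Nat.eq_zero_or_pos d with rfl | hd
  · have hp0 : p.totalDegree = 0 := Nat.le_zero.mp hp
    rw [MvPolynomial.totalDegree_eq_zero_iff_eq_C] at hp0
    rw [hp0]
    have : {W : (Fin n → ℝ) × (Fin n → ℝ) × (Fin n → ℝ) |
        |MvPolynomial.eval W.1 (MvPolynomial.C (p.coeff 0))| <
          ε * |noisyDeriv θ W.2.1 W.2.2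
            (fun V => MvPolynomial.eval V (MvPolynomial.C (p.coeff 0))) W.1|} = ∅ := by
      ext W
      simp [noisyDeriv]
    rw [this]; simp
  by_cases hdε : d * ε ≤ 1 / 8
  swap
  · have hd1 : (1:ℝ) ≤ d := by exact_mod_cast hd
    push Not at hdε
    refine (ENNReal.toReal_mono ENNReal.one_ne_top prob_le_one).trans ?_
    rw [ENNReal.toReal_one]
    nlinarith
  set B : Set ((Fin n → ℝ) × (Fin n → ℝ)) := {W | θ / (2 * ε) * |MvPolynomial.eval W.1 p| <
        |MvPolynomial.eval (noisy θ W.2 W.1) p - MvPolynomial.eval W.1 p|} with hB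
  have hBb : (γ.prod γ) B ≤ ENNReal.ofReal (128 * d ^ 2 * ε) :=
    pair_bound p hp hd ε θ hε hθ hθε hdε
  have hc := MvPolynomial.continuous_eval p
  have hcn : Continuous fun W : (Fin n → ℝ) × (Fin n → ℝ) => noisy θ W.2 W.1 := by
    unfold noisy; fun_prop
  have hBm : MeasurableSet B := (isOpen_lt
    (continuous_const.mul (hc.comp continuous_fst).abs)
    ((hc.comp hcn).sub (hc.comp continuous_fst)).abs).measurableSet
  have m1 : MeasurePreserving
      (Prod.map id Prod.fst : (Fin n → ℝ) × (Fin n → ℝ) × (Fin n → ℝ) → _)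
      (γ.prod (γ.prod γ)) (γ.prod γ) :=
    (MeasurePreserving.id γ).prod measurePreserving_fst
  have m2 : MeasurePreserving
      (Prod.map id Prod.snd : (Fin n → ℝ) × (Fin n → ℝ) × (Fin n → ℝ) → _)
      (γ.prod (γ.prod γ)) (γ.prod γ) :=
    (MeasurePreserving.id γ).prod measurePreserving_snd
  have hsub : {W : (Fin n → ℝ) × (Fin n → ℝ) × (Fin n → ℝ) | |MvPolynomial.eval W.1 p| <
      ε * |noisyDeriv θ W.2.1 W.2.2 (fun V => MvPolynomial.eval V p) W.1|} ⊆
      (Prod.map id Prod.fst) ⁻¹' B ∪ (Prod.map id Prod.snd) ⁻¹' B := by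
    rintro ⟨X, Y, Z⟩ h
    by_contra hcon
    simp only [Set.mem_union, Set.mem_preimage, not_or, hB, Set.mem_ofPred_eq, Prod.map, id,
      not_lt] at hcon h
    obtain ⟨h1, h2⟩ := hcon
    unfold noisyDeriv at h
    rw [abs_div, abs_of_pos hθ] at h
    set u := MvPolynomial.eval X p
    set v := MvPolynomial.eval (noisy θ Y X) p
    set w := MvPolynomial.eval (noisy θ Z X) p
    have h3 : |v - w| ≤ θ / ε * |u| := by
      have : |v - w| ≤ |v - u| + |w - u| := by
        rw [abs_sub_comm w u]; exact abs_sub_le v u w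
      have e : θ / ε * |u| = θ / (2 * ε) * |u| + θ / (2 * ε) * |u| := by field_simp; norm_num
      linarith
    have h4 : ε * (|v - w| / θ) ≤ ε * ((θ / ε * |u|) / θ) := by gcongr
    have h5 : ε * ((θ / ε * |u|) / θ) = |u| := by field_simp
    linarith
  have hle := (measure_mono (μ := γ.prod (γ.prod γ)) hsub).trans (measure_union_le _ _)
  rw [m1.measure_preimage hBm.nullMeasurableSet, m2.measure_preimage hBm.nullMeasurableSet] at hle
  have hle2 := hle.trans (add_le_add hBb hBb)
  rw [← ENNReal.ofReal_add (by positivity) (by positivity)] at hle2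
  refine (ENNReal.toReal_le_of_le_ofReal (by positivity) hle2).trans ?_
  have : 0 ≤ (d:ℝ) ^ 2 * ε := by positivity
  nlinarith
end

section
/- There exists an absolute constant C > 0 such that the following holds. Let q(X,Y) be a polynomial of degree at most d in the coordinates of (X,Y), and let X, Y, Z be independent standard Gaussian vectors (X on ℝ^{n₁}, Y and Z on ℝ^{n₂}). Then Var_Y( E_X[q(X,Y)²] ) ≤ C^d · E_{X,Y,Z}[(q(X,Y) − q(X,Z))²] · E_{X,Y}[q(X,Y)²]. -/
open MeasureTheory ProbabilityTheory

section Abstract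

open MvPolynomial

set_option linter.unusedSectionVars false

variable {σ : Type} [Fintype σ]

/-- An abstract Gaussian expectation functional on polynomials. -/
structure GaussE (E : MvPolynomial σ ℝ →ₗ[ℝ] ℝ) : Prop where
  one : E 1 = 1
  nonneg : ∀ p, (∀ x, 0 ≤ eval x p) → 0 ≤ E p
  stein : ∀ i p, E (pderiv i p) = E (X i * p)

/-- The number operator. -/
noncomputable def numOp : MvPolynomial σ ℝ →ₗ[ℝ] MvPolynomial σ ℝ :=
  ∑ i, (LinearMap.mulLeft ℝ (X i) ∘ₗ (pderiv i).toLinearMap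
    - (pderiv i).toLinearMap ∘ₗ (pderiv i).toLinearMap)

lemma numOp_apply (p : MvPolynomial σ ℝ) :
    numOp p = ∑ i, (X i * pderiv i p - pderiv i (pderiv i p)) := by
  simp [numOp]

lemma pderiv_comm' (i j : σ) (p : MvPolynomial σ ℝ) :
    pderiv i (pderiv j p) = pderiv j (pderiv i p) := by
  classical
  ext m
  simp only [coeff_pderiv]
  rw [add_right_comm]
  by_cases h : i = j
  · subst h; rfl
  · have h' : j ≠ i := fun e => h e.symm
    simp [h, h']
    ring

lemma pderiv_numOp (j : σ) (p : MvPolynomial σ ℝ) :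
    pderiv j (numOp p) = numOp (pderiv j p) + pderiv j p := by
  classical
  rw [numOp_apply, numOp_apply, map_sum]
  have : ∀ i, pderiv j (X i * pderiv i p - pderiv i (pderiv i p)) =
      (X i * pderiv i (pderiv j p) - pderiv i (pderiv i (pderiv j p)))
        + (if i = j then pderiv j p else 0) := by
    intro i
    rw [map_sub, pderiv_mul, pderiv_comm' j i p, pderiv_comm' j i (pderiv i p), pderiv_comm' j i p]
    by_cases h : i = j
    · subst h; simp; ring
    · simp [pderiv_X_of_ne h, h]
  rw [Finset.sum_congr rfl fun i _ => this i, Finset.sum_add_distrib]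
  simp

lemma coeff_numOp (m : σ →₀ ℕ) (p : MvPolynomial σ ℝ) :
    coeff m (numOp p) = (m.degree : ℝ) * coeff m p -
      ∑ i, coeff (m + Finsupp.single i 1 + Finsupp.single i 1) p
        * (((m + Finsupp.single i 1 : σ →₀ ℕ) i : ℝ) + 1) * (m i + 1) := by
  classical
  rw [numOp_apply, coeff_sum]
  simp only [coeff_sub, Finset.sum_sub_distrib]
  congr 1
  · have : ∀ i, coeff m (X i * pderiv i p) = (m i : ℝ) * coeff m p := by
      intro i
      rw [coeff_X_mul']
      split_ifs with h
      · rw [coeff_pderiv]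
        have h1 : m i ≠ 0 := by simpa using h
        rw [Finsupp.sub_add_single_one_cancel h1]
        have : 1 ≤ m i := Nat.one_le_iff_ne_zero.2 h1
        simp [Nat.cast_sub this]
        ring
      · have h1 : m i = 0 := by simpa using h
        simp [h1]
    rw [Finset.sum_congr rfl fun i _ => this i, ← Finset.sum_mul, Finsupp.degree_eq_sum]
    push_cast; rfl
  · simp [coeff_pderiv]

/-- Polynomials of degree `< k`. -/
def lowDeg (k : ℕ) (p : MvPolynomial σ ℝ) : Prop := ∀ m : σ →₀ ℕ, k ≤ m.degree → coeff m p = 0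

/-- `N - j`. -/
noncomputable def shiftOp (j : ℕ) : Module.End ℝ (MvPolynomial σ ℝ) :=
  numOp - (j : ℝ) • 1

/-- product of `N - i` for `i < j`. -/
noncomputable def prodOp : ℕ → Module.End ℝ (MvPolynomial σ ℝ)
  | 0 => 1
  | j + 1 => prodOp j * shiftOp j

lemma shiftOp_apply (j : ℕ) (p : MvPolynomial σ ℝ) : shiftOp j p = numOp p - (j : ℝ) • p := by
  simp [shiftOp]

lemma lowDeg.shift {j : ℕ} {p : MvPolynomial σ ℝ} (h : lowDeg (j + 1) p) :
    lowDeg j (shiftOp j p) := by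
  intro m hm
  rw [shiftOp_apply, coeff_sub, coeff_numOp, coeff_smul, smul_eq_mul]
  rw [Finset.sum_eq_zero]
  · rcases hm.eq_or_lt with h1 | h1
    · rw [h1]; ring
    · rw [h m h1]; ring
  · intro i _
    rw [h]
    · ring
    · simp [map_add, Finsupp.degree_single]; omega

lemma lowDeg.sub {k : ℕ} {p q : MvPolynomial σ ℝ} (hp : lowDeg k p) (hq : lowDeg k q) :
    lowDeg k (p - q) := fun m hm => by rw [coeff_sub, hp m hm, hq m hm, sub_zero]
lemma lowDeg.add {k : ℕ} {p q : MvPolynomial σ ℝ} (hp : lowDeg k p) (hq : lowDeg k q) :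
    lowDeg k (p + q) := fun m hm => by rw [coeff_add, hp m hm, hq m hm, add_zero]
lemma lowDeg.smul {k : ℕ} {p : MvPolynomial σ ℝ} (c : ℝ) (hp : lowDeg k p) :
    lowDeg k (c • p) := fun m hm => by rw [coeff_smul, hp m hm, smul_zero]
lemma lowDeg.mono {k l : ℕ} {p : MvPolynomial σ ℝ} (hp : lowDeg k p) (h : k ≤ l) :
    lowDeg l p := fun m hm => hp m (h.trans hm)
lemma lowDeg.pd {k : ℕ} {p : MvPolynomial σ ℝ} (hp : lowDeg (k + 1) p) (i : σ) :
    lowDeg k (pderiv i p) := fun m hm => by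
  rw [coeff_pderiv, hp, zero_mul]
  simp [map_add, Finsupp.degree_single]; omega

lemma lowDeg.shift' {k j : ℕ} {p : MvPolynomial σ ℝ} (h : lowDeg k p) :
    lowDeg k (shiftOp j p) := by
  have h1 : shiftOp j p = shiftOp k p + ((k : ℝ) - j) • p := by
    rw [shiftOp_apply, shiftOp_apply]; module
  rw [h1]
  exact ((h.mono k.le_succ).shift).add (h.smul _)

lemma lowDeg.prod {k j : ℕ} {p : MvPolynomial σ ℝ} (h : lowDeg k p) :
    lowDeg k (prodOp j p) := by
  induction j generalizing p with
  | zero => exact h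
  | succ j ih => exact ih h.shift'

lemma lowDeg.kill {k : ℕ} {p : MvPolynomial σ ℝ} (h : lowDeg k p) : prodOp k p = 0 := by
  induction k generalizing p with
  | zero =>
    have : p = 0 := by ext m; simpa using h m (Nat.zero_le _)
    rw [this, map_zero]
  | succ k ih => exact ih h.shift

lemma shiftOp_comm (i j : ℕ) : Commute (shiftOp (σ := σ) i) (shiftOp j) := by
  unfold shiftOp
  apply Commute.sub_left
  · apply Commute.sub_right rfl
    exact (Commute.one_right _).smul_right _
  · exact (Commute.one_left _).smul_left _

lemma shiftOp_prodOp_comm (i j : ℕ) : Commute (shiftOp (σ := σ) i) (prodOp j) := by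
  induction j with
  | zero => exact Commute.one_right _
  | succ j ih => exact ih.mul_right (shiftOp_comm i j)

lemma prodOp_lead (d j : ℕ) (hj : j ≤ d) : ∃ c : ℝ, c ≠ 0 ∧
    ∀ f : MvPolynomial σ ℝ, lowDeg (d + 1) f → lowDeg d (prodOp j f - c • f) := by
  induction j with
  | zero => exact ⟨1, one_ne_zero, fun f _ => by simp [prodOp]; intro m _; simp⟩
  | succ j ih =>
    obtain ⟨c, hc, h⟩ := ih (by omega)
    have hdj : (d : ℝ) - j ≠ 0 := by
      have : (j : ℝ) < d := by exact_mod_cast hj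
      linarith
    refine ⟨((d : ℝ) - j) * c, mul_ne_zero hdj hc, fun f hf => ?_⟩
    have h1 : shiftOp j f = shiftOp d f + ((d : ℝ) - j) • f := by
      rw [shiftOp_apply, shiftOp_apply]; module
    have h2 : prodOp (j + 1) f - (((d : ℝ) - j) * c) • f =
        prodOp j (shiftOp d f) + ((d : ℝ) - j) • (prodOp j f - c • f) := by
      change prodOp j (shiftOp j f) - _ = _
      rw [h1, map_add, map_smul]; module
    rw [h2]
    exact hf.shift.prod.add ((h f hf).smul _)

variable {E : MvPolynomial σ ℝ →ₗ[ℝ] ℝ}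

lemma GaussE.dir (hE : GaussE E) (f g : MvPolynomial σ ℝ) :
    E (f * numOp g) = ∑ i, E (pderiv i f * pderiv i g) := by
  rw [numOp_apply, Finset.mul_sum, map_sum]
  refine Finset.sum_congr rfl fun i _ => ?_
  have := hE.stein i (f * pderiv i g)
  rw [pderiv_mul, map_add] at this
  rw [mul_sub, map_sub]
  rw [show f * (X i * pderiv i g) = X i * (f * pderiv i g) by ring]
  linarith

lemma GaussE.numOp_symm (hE : GaussE E) (f g : MvPolynomial σ ℝ) :
    E (f * numOp g) = E (numOp f * g) := by
  rw [mul_comm (numOp f), hE.dir, hE.dir]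
  simp only [mul_comm]

lemma GaussE.shift_symm (hE : GaussE E) (j : ℕ) (f g : MvPolynomial σ ℝ) :
    E (f * shiftOp j g) = E (shiftOp j f * g) := by
  rw [shiftOp_apply, shiftOp_apply, mul_sub, sub_mul, map_sub, map_sub, hE.numOp_symm]
  simp

lemma GaussE.prod_symm (hE : GaussE E) (j : ℕ) (f g : MvPolynomial σ ℝ) :
    E (f * prodOp j g) = E (prodOp j f * g) := by
  induction j generalizing f g with
  | zero => rfl
  | succ j ih =>
    change E (f * prodOp j (shiftOp j g)) = E (prodOp j (shiftOp j f) * g)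
    rw [ih, hE.shift_symm]
    have := congrArg (fun T => T f) (shiftOp_prodOp_comm (σ := σ) j j).eq
    simp only [Module.End.mul_apply] at this
    rw [this]

lemma GaussE.mono (hE : GaussE E) {p q : MvPolynomial σ ℝ} (h : ∀ x, eval x p ≤ eval x q) :
    E p ≤ E q := by
  have := hE.nonneg (q - p) (fun x => by rw [map_sub]; linarith [h x])
  rw [map_sub] at this; linarith

lemma GaussE.sqE_nonneg (hE : GaussE E) (p : MvPolynomial σ ℝ) : 0 ≤ E (p ^ 2) :=
  hE.nonneg _ fun x => by rw [map_pow]; positivity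

lemma GaussE.cs (hE : GaussE E) (f g : MvPolynomial σ ℝ) :
    E (f * g) ^ 2 ≤ E (f ^ 2) * E (g ^ 2) := by
  have h : ∀ t : ℝ, 0 ≤ E (g ^ 2) * (t * t) + (2 * E (f * g)) * t + E (f ^ 2) := by
    intro t
    have := hE.sqE_nonneg (f + t • g)
    have e : (f + t • g) ^ 2 = f ^ 2 + (2 * t) • (f * g) + (t * t) • g ^ 2 := by
      simp only [smul_eq_C_mul, map_mul, map_ofNat]; ring
    rw [e] at this
    simp only [map_add, map_smul, smul_eq_mul] at this
    linarith
  have := discrim_le_zero h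
  unfold discrim at this
  nlinarith

lemma GaussE.const (hE : GaussE E) {f : MvPolynomial σ ℝ} (h : lowDeg 1 f) : f = C (coeff 0 f) := by
  classical
  ext m
  rw [coeff_C]
  split_ifs with hm
  · rw [hm]
  · apply h
    by_contra hh
    have : m.degree = 0 := by omega
    exact hm ((Finsupp.degree_eq_zero_iff m).1 this).symm

lemma GaussE.E_C (hE : GaussE E) (a : ℝ) : E (C a) = a := by
  have : (C a : MvPolynomial σ ℝ) = a • 1 := by rw [smul_eq_C_mul, mul_one]
  rw [this, map_smul, hE.one, smul_eq_mul, mul_one]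

lemma GaussE.chaos (hE : GaussE E) (k : ℕ) : ∀ (ι : Type) [Fintype ι] (F : ι → MvPolynomial σ ℝ),
    (∀ i, lowDeg (k + 1) (F i)) → (∀ i, numOp (F i) = (k : ℝ) • F i) →
    E ((∑ i, F i ^ 2) ^ 2) ≤ 9 ^ k * E (∑ i, F i ^ 2) ^ 2 := by
  induction k with
  | zero =>
    intro ι _ F hF _
    have h : ∑ i, F i ^ 2 = C (∑ i, coeff 0 (F i) ^ 2) := by
      rw [map_sum]
      refine Finset.sum_congr rfl fun i _ => ?_
      conv_lhs => rw [hE.const (hF i)]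
      rw [map_pow]
    rw [h, ← map_pow, hE.E_C, hE.E_C]; simp
  | succ k ih =>
    intro ι _ F hF hN
    have ih' := ih (ι × σ) (fun a => pderiv a.2 (F a.1)) (fun a => (hF a.1).pd a.2) (by
      rintro ⟨i, j⟩
      have := pderiv_numOp j (F i)
      rw [hN, Derivation.map_smul] at this
      push_cast at this
      simp only
      linear_combination -this + (by module :
        ((k : ℝ) + 1) • pderiv j (F i) = (k : ℝ) • pderiv j (F i) + pderiv j (F i)))
    set S := ∑ i, F i ^ 2 with hS
    set G := ∑ a : ι × σ, pderiv a.2 (F a.1) ^ 2 with hG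
    have hG' : G = ∑ i, ∑ j, pderiv j (F i) ^ 2 := by rw [hG, Fintype.sum_prod_type]
    have e1 : E G = (k + 1) * E S := by
      rw [hG', hS, map_sum, map_sum, Finset.mul_sum]
      refine Finset.sum_congr rfl fun i _ => ?_
      have := hE.dir (F i) (F i)
      rw [hN, mul_smul_comm, map_smul, smul_eq_mul] at this
      rw [map_sum]
      simp only [sq]
      rw [← this]; push_cast; ring
    have hdS : ∀ j, pderiv j S = ∑ i, 2 * F i * pderiv j (F i) := by
      intro j
      rw [hS, map_sum]
      refine Finset.sum_congr rfl fun i _ => ?_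
      rw [pderiv_pow]; simp
    have e2 : (k + 1) * E (S ^ 2) ≤ 3 * E (S * G) := by
      have h1 : (k + 1) * E (S ^ 2) =
          E (∑ i, ∑ j, pderiv j (S * F i) * pderiv j (F i)) := by
        rw [map_sum]
        have : ∀ i, E (∑ j, pderiv j (S * F i) * pderiv j (F i)) = (k + 1) * E (S * F i ^ 2) := by
          intro i
          rw [map_sum, ← hE.dir, hN, mul_smul_comm, map_smul, smul_eq_mul]
          push_cast; congr 2; ring
        rw [Finset.sum_congr rfl fun i _ => this i, ← Finset.mul_sum, ← map_sum, ← Finset.mul_sum,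
          ← hS, sq]
      have h3 : 3 * E (S * G) = E ((3 : ℝ) • (S * G)) := by simp
      rw [h1, h3]
      apply hE.mono
      intro x
      simp only [pderiv_mul, hdS]
      simp only [hS, hG', map_sum, map_mul, map_add, smul_eval, map_pow, map_ofNat]
      set a : ι → ℝ := fun i => eval x (F i)
      set b : ι → σ → ℝ := fun i j => eval x (pderiv j (F i))
      change ∑ i, ∑ j, ((∑ l, 2 * a l * b l j) * a i + (∑ l, a l ^ 2) * b i j) * b i j ≤
        3 * ((∑ l, a l ^ 2) * ∑ i, ∑ j, b i j ^ 2)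
      have h4 : ∑ i, ∑ j, ((∑ l, 2 * a l * b l j) * a i + (∑ l, a l ^ 2) * b i j) * b i j =
          ∑ j, (2 * (∑ i, a i * b i j) ^ 2 + (∑ l, a l ^ 2) * ∑ i, b i j ^ 2) := by
        rw [Finset.sum_comm]
        refine Finset.sum_congr rfl fun j _ => ?_
        have : ∑ l, 2 * a l * b l j = 2 * ∑ i, a i * b i j := by
          rw [Finset.mul_sum]; simp only [mul_assoc]
        rw [this]
        set c := ∑ i, a i * b i j with hc
        have h7 : 2 * c ^ 2 = ∑ i, 2 * c * (a i * b i j) := by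
          rw [← Finset.mul_sum, ← hc]; ring
        rw [h7, Finset.mul_sum Finset.univ (fun i => b i j ^ 2), ← Finset.sum_add_distrib]
        refine Finset.sum_congr rfl fun i _ => by ring
      rw [h4, Finset.sum_comm, Finset.mul_sum, Finset.mul_sum]
      refine Finset.sum_le_sum fun j _ => ?_
      have := Finset.sum_mul_sq_le_sq_mul_sq Finset.univ a (fun i => b i j)
      linarith
    have e3 := hE.cs S G
    have hA := hE.sqE_nonneg S
    have hB := hE.sqE_nonneg G
    have hSG : 0 ≤ E (S * G) := by
      have : 0 ≤ (k + 1) * E (S ^ 2) := by positivity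
      linarith
    rcases hA.eq_or_lt with h0 | h0
    · rw [← h0]; positivity
    · have h5 : ((k + 1) * E (S ^ 2)) ^ 2 ≤ 9 * (E (S ^ 2) * E (G ^ 2)) := by
        have : ((k + 1) * E (S ^ 2)) ^ 2 ≤ (3 * E (S * G)) ^ 2 :=
          pow_le_pow_left₀ (by positivity) e2 2
        nlinarith
      have h6 : (k + 1) ^ 2 * E (S ^ 2) ≤ 9 * E (G ^ 2) := by
        refine le_of_mul_le_mul_left ?_ h0
        nlinarith
      rw [e1] at ih'
      have hk : (0 : ℝ) < (k + 1) ^ 2 := by positivity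
      refine le_of_mul_le_mul_left ?_ hk
      calc ((k : ℝ) + 1) ^ 2 * E (S ^ 2) ≤ 9 * E (G ^ 2) := h6
        _ ≤ 9 * (9 ^ k * ((k + 1) * E S) ^ 2) := by linarith
        _ = (k + 1) ^ 2 * (9 ^ (k + 1) * E S ^ 2) := by ring

lemma GaussE.hyper (hE : GaussE E) (d : ℕ) : ∀ f : MvPolynomial σ ℝ, lowDeg (d + 1) f →
    E (f ^ 4) ≤ 72 ^ d * E (f ^ 2) ^ 2 := by
  induction d with
  | zero =>
    intro f hf
    rw [hE.const hf, ← C_pow, ← C_pow, hE.E_C, hE.E_C]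
    apply le_of_eq; ring
  | succ d ih =>
    intro f hf
    obtain ⟨c, hc, h⟩ := prodOp_lead (σ := σ) (d + 1) (d + 1) le_rfl
    have hlow := h f hf
    set P := prodOp (d + 1) f with hP
    set u := c⁻¹ • P with hu
    set g := f - u with hg
    have hgl : lowDeg (d + 1) g := by
      have : g = (-c⁻¹) • (P - c • f) := by
        rw [hg, hu, smul_sub, smul_smul, neg_mul, inv_mul_cancel₀ hc]; module
      rw [this]; exact hlow.smul _
    have hul : lowDeg (d + 1 + 1) u := hf.prod.smul _
    have hNu : numOp u = ((d + 1 : ℕ) : ℝ) • u := by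
      have h1 : shiftOp (d + 1) P = 0 := by
        have := congrArg (fun T => T f) (shiftOp_prodOp_comm (σ := σ) (d + 1) (d + 1)).eq
        simp only [Module.End.mul_apply] at this
        rw [hP, this, hf.shift.kill]
      rw [shiftOp_apply, sub_eq_zero] at h1
      rw [hu, map_smul, h1, smul_comm]
    have horth : E (u * g) = 0 := by
      rw [hu, smul_mul_assoc, map_smul, hP, ← hE.prod_symm, hgl.kill]; simp
    have hfe : f = u + g := by rw [hg]; ring
    have hch := hE.chaos (d + 1) Unit (fun _ => u) (fun _ => hul) (fun _ => hNu)
    simp only [Finset.univ_unique, Finset.sum_const, Finset.card_singleton, one_smul] at hch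
    rw [← pow_mul] at hch
    have hih := ih g hgl
    have h2 : E (f ^ 2) = E (u ^ 2) + E (g ^ 2) := by
      have : f ^ 2 = u ^ 2 + (2 : ℝ) • (u * g) + g ^ 2 := by
        rw [hfe, smul_eq_C_mul, map_ofNat]; ring
      rw [this, map_add, map_add, map_smul, horth]; simp
    have h4 : E (f ^ 4) ≤ 8 * (E (u ^ 4) + E (g ^ 4)) := by
      have : 8 * (E (u ^ 4) + E (g ^ 4)) = E ((8 : ℝ) • (u ^ 4 + g ^ 4)) := by
        rw [map_smul, map_add, smul_eq_mul]
      rw [this]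
      apply hE.mono
      intro x
      rw [hfe]
      simp only [map_pow, map_add, smul_eval]
      set a := eval x u
      set b := eval x g
      nlinarith [sq_nonneg (a - b), sq_nonneg (a ^ 2 - b ^ 2), sq_nonneg (a + b),
        mul_nonneg (sq_nonneg (a - b)) (sq_nonneg (a + b)),
        mul_nonneg (sq_nonneg (a - b)) (sq_nonneg (a - b)),
        mul_nonneg (sq_nonneg (a - b)) (sq_nonneg a),
        mul_nonneg (sq_nonneg (a - b)) (sq_nonneg b)]
    have ha := hE.sqE_nonneg u
    have hb := hE.sqE_nonneg g
    rw [h2]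
    have h9 : (8 : ℝ) * 9 ^ (d + 1) ≤ 72 ^ (d + 1) := by
      have : (9 : ℝ) ^ d ≤ 72 ^ d := by gcongr; norm_num
      rw [pow_succ, pow_succ]; linarith
    have h10 : (8 : ℝ) * 72 ^ d ≤ 72 ^ (d + 1) := by
      have : (0 : ℝ) < 72 ^ d := by positivity
      rw [pow_succ]; linarith
    calc E (f ^ 4) ≤ 8 * (9 ^ (d + 1) * E (u ^ 2) ^ 2 + 72 ^ d * E (g ^ 2) ^ 2) := by
          linarith
      _ = 8 * 9 ^ (d + 1) * E (u ^ 2) ^ 2 + 8 * 72 ^ d * E (g ^ 2) ^ 2 := by ring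
      _ ≤ 72 ^ (d + 1) * E (u ^ 2) ^ 2 + 72 ^ (d + 1) * E (g ^ 2) ^ 2 := by gcongr
      _ ≤ 72 ^ (d + 1) * (E (u ^ 2) + E (g ^ 2)) ^ 2 := by
          rw [← mul_add]; gcongr; nlinarith [mul_nonneg ha hb]

lemma GaussE.prod_bound (hE : GaussE E) (d : ℕ) (f g : MvPolynomial σ ℝ)
    (hf : lowDeg (d + 1) f) (hg : lowDeg (d + 1) g) :
    E ((f * g) ^ 2) ≤ 72 ^ d * (E (f ^ 2) * E (g ^ 2)) := by
  have h1 := hE.cs (f ^ 2) (g ^ 2)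
  have e1 : (f ^ 2) ^ 2 = f ^ 4 := by ring
  have e2 : (g ^ 2) ^ 2 = g ^ 4 := by ring
  rw [e1, e2, ← mul_pow] at h1
  have h2 := hE.hyper d f hf
  have h3 := hE.hyper d g hg
  have hf0 := hE.sqE_nonneg f
  have hg0 := hE.sqE_nonneg g
  have hg4 : 0 ≤ E (g ^ 4) := e2 ▸ hE.sqE_nonneg (g ^ 2)
  have h4 : E (f ^ 4) * E (g ^ 4) ≤ (72 ^ d * E (f ^ 2) ^ 2) * (72 ^ d * E (g ^ 2) ^ 2) :=
    mul_le_mul h2 h3 hg4 (by positivity)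
  have h5 : (72 ^ d * E (f ^ 2) ^ 2) * (72 ^ d * E (g ^ 2) ^ 2) =
    (72 ^ d * (E (f ^ 2) * E (g ^ 2))) ^ 2 := by ring
  exact abs_le_of_sq_le_sq' (by linarith) (by positivity) |>.2

end Abstract

section Concrete

open MvPolynomial

lemma gaussian_integrable_pow (k : ℕ) : Integrable (fun x : ℝ => x ^ k) (gaussianReal 0 1) := by
  have h := (memLp_id_gaussianReal' (μ := 0) (v := 1) (k : ENNReal) (by simp)).integrable_norm_pow'
  refine h.mono' (by fun_prop) ?_
  filter_upwards with x
  simp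

lemma gaussian_integrable_pdf (k : ℕ) :
    Integrable (fun x : ℝ => x ^ k * gaussianPDFReal 0 1 x) := by
  have h := gaussian_integrable_pow k
  rw [gaussianReal_of_var_ne_zero _ one_ne_zero,
    integrable_withDensity_iff_integrable_smul' (measurable_gaussianPDF _ _)
      (ae_of_all _ fun _ ↦ gaussianPDF_lt_top)] at h
  refine h.congr (ae_of_all _ fun x => ?_)
  simp [mul_comm]

lemma hasDerivAt_pdf (x : ℝ) :
    HasDerivAt (gaussianPDFReal 0 1) (-(x * gaussianPDFReal 0 1 x)) x := by
  have h : HasDerivAt (fun x : ℝ => -x ^ 2 / 2) (-x) x := by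
    have := ((hasDerivAt_pow 2 x).neg).div_const 2
    refine this.congr_deriv ?_
    norm_num
    try ring
  have h2 := (h.exp).const_mul ((√(2 * Real.pi * (1 : NNReal)))⁻¹)
  have e : gaussianPDFReal 0 1 =
      fun x : ℝ => (√(2 * Real.pi * (1 : NNReal)))⁻¹ * Real.exp (-x ^ 2 / 2) := by
    ext y; simp [gaussianPDFReal]
  rw [e]
  refine h2.congr_deriv ?_
  ring

lemma gaussian_moment (k : ℕ) :
    ∫ x, x ^ (k + 1) ∂(gaussianReal 0 1) = k * ∫ x, x ^ (k - 1) ∂(gaussianReal 0 1) := by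
  have h := integral_mul_deriv_eq_deriv_mul_of_integrable
    (u := fun x : ℝ => x ^ k) (v := gaussianPDFReal 0 1)
    (u' := fun x => (k : ℝ) * x ^ (k - 1)) (v' := fun x => -(x * gaussianPDFReal 0 1 x))
    (fun x _ => hasDerivAt_pow k x) (fun x _ => hasDerivAt_pdf x)
    (by
      refine (gaussian_integrable_pdf (k + 1)).neg.congr (ae_of_all _ fun x => ?_)
      simp; ring)
    (by
      refine ((gaussian_integrable_pdf (k - 1)).const_mul (k : ℝ)).congr (ae_of_all _ fun x => ?_)
      simp; ring)
    (gaussian_integrable_pdf k)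
  rw [integral_gaussianReal_eq_integral_smul one_ne_zero,
    integral_gaussianReal_eq_integral_smul one_ne_zero, ← integral_const_mul]
  have e1 : ∀ x : ℝ, x ^ k * -(x * gaussianPDFReal 0 1 x) =
      -(gaussianPDFReal 0 1 x • x ^ (k + 1)) := fun x => by simp; ring
  have e2 : ∀ x : ℝ, (k : ℝ) * x ^ (k - 1) * gaussianPDFReal 0 1 x =
      k * (gaussianPDFReal 0 1 x • x ^ (k - 1)) := fun x => by simp; ring
  simp only [e1, e2] at h
  rw [integral_neg] at h
  linarith

/-- Standard Gaussian measure on `σ → ℝ`. -/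
noncomputable abbrev gam (σ : Type) [Fintype σ] : Measure (σ → ℝ) :=
  Measure.pi fun _ => gaussianReal 0 1

variable {σ : Type} [Fintype σ]

lemma eval_monomial_prod (m : σ →₀ ℕ) (a : ℝ) (x : σ → ℝ) :
    eval x (monomial m a) = a * ∏ i, x i ^ m i := by
  rw [eval_monomial, Finsupp.prod_fintype _ _ (by simp)]

lemma gam_integrable (p : MvPolynomial σ ℝ) : Integrable (fun x => eval x p) (gam σ) := by
  induction p using MvPolynomial.induction_on' with
  | monomial m a =>
    simp only [eval_monomial_prod]
    exact (Integrable.fintype_prod (f := fun i (x : ℝ) => x ^ m i)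
      (fun i => gaussian_integrable_pow (m i))).const_mul a
  | add p q hp hq =>
    simp only [map_add]
    exact hp.add hq

/-- Gaussian expectation of polynomials. -/
noncomputable def gamE (σ : Type) [Fintype σ] : MvPolynomial σ ℝ →ₗ[ℝ] ℝ where
  toFun p := ∫ x, eval x p ∂(gam σ)
  map_add' p q := by
    simp only [map_add]
    exact integral_add (gam_integrable p) (gam_integrable q)
  map_smul' c p := by
    simp only [smul_eval, RingHom.id_apply, smul_eq_mul]
    exact integral_const_mul c _

lemma gamE_apply (p : MvPolynomial σ ℝ) : gamE σ p = ∫ x, eval x p ∂(gam σ) := rfl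

lemma gamE_monomial (m : σ →₀ ℕ) (a : ℝ) :
    gamE σ (monomial m a) = a * ∏ i, ∫ x, x ^ m i ∂(gaussianReal 0 1) := by
  rw [gamE_apply]
  simp only [eval_monomial_prod]
  rw [integral_const_mul, integral_fintype_prod_eq_prod (f := fun i (x : ℝ) => x ^ m i)]

lemma gamE_gauss : GaussE (gamE σ) where
  one := by rw [gamE_apply]; simp
  nonneg p hp := integral_nonneg hp
  stein i p := by
    classical
    induction p using MvPolynomial.induction_on' with
    | add p q hp hq => rw [map_add, map_add, mul_add, map_add, hp, hq]
    | monomial m a =>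
      rw [pderiv_monomial, X, monomial_mul, gamE_monomial, gamE_monomial,
        ← Finset.mul_prod_erase _ _ (Finset.mem_univ i),
        ← Finset.mul_prod_erase Finset.univ (fun j => ∫ x, x ^ _ ∂(gaussianReal 0 1))
          (Finset.mem_univ i)]
      have h1 : ∀ j ∈ Finset.univ.erase i, (m - Finsupp.single i 1 : σ →₀ ℕ) j = m j := by
        intro j hj
        have : i ≠ j := fun e => by simp [e] at hj
        simp [this]
      have h2 : ∀ j ∈ Finset.univ.erase i, (Finsupp.single i 1 + m : σ →₀ ℕ) j = m j := by
        intro j hj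
        have : i ≠ j := fun e => by simp [e] at hj
        simp [this]
      have h5 : ∏ j ∈ Finset.univ.erase i,
            ∫ x, x ^ (m - Finsupp.single i 1 : σ →₀ ℕ) j ∂(gaussianReal 0 1) =
          ∏ j ∈ Finset.univ.erase i, ∫ x, x ^ m j ∂(gaussianReal 0 1) :=
        Finset.prod_congr rfl fun j hj => by rw [h1 j hj]
      have h6 : ∏ j ∈ Finset.univ.erase i,
            ∫ x, x ^ (Finsupp.single i 1 + m : σ →₀ ℕ) j ∂(gaussianReal 0 1) =
          ∏ j ∈ Finset.univ.erase i, ∫ x, x ^ m j ∂(gaussianReal 0 1) :=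
        Finset.prod_congr rfl fun j hj => by rw [h2 j hj]
      rw [h5, h6]
      have h3 : (Finsupp.single i 1 + m : σ →₀ ℕ) i = m i + 1 := by simp [add_comm]
      have h4 : (m - Finsupp.single i 1 : σ →₀ ℕ) i = m i - 1 := by simp
      rw [h3, h4, gaussian_moment]
      ring

variable {α β : Type} [Fintype α] [Fintype β]

lemma gam_mp : MeasurePreserving (fun w : (α → ℝ) × (β → ℝ) => Sum.elim w.1 w.2)
    ((gam α).prod (gam β)) (gam (α ⊕ β)) := by
  have := measurePreserving_sumPiEquivProdPi_symm (X := fun _ : α ⊕ β => ℝ)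
    (fun _ => gaussianReal 0 1)
  convert this using 1
  ext w i
  cases i <;> rfl

lemma gam_prod_integrable (p : MvPolynomial (α ⊕ β) ℝ) :
    Integrable (fun w : (α → ℝ) × (β → ℝ) => eval (Sum.elim w.1 w.2) p)
      ((gam α).prod (gam β)) :=
  gam_mp.integrable_comp_of_integrable (gam_integrable p)

lemma gamE_prod (p : MvPolynomial (α ⊕ β) ℝ) :
    gamE (α ⊕ β) p = ∫ w : (α → ℝ) × (β → ℝ), eval (Sum.elim w.1 w.2) p
      ∂((gam α).prod (gam β)) := by
  rw [gamE_apply, ← gam_mp.map_eq, integral_map gam_mp.measurable.aemeasurable]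
  rw [gam_mp.map_eq]
  exact (gam_integrable p).aestronglyMeasurable

lemma gam_left_integrable (p : MvPolynomial (α ⊕ β) ℝ) (w : β → ℝ) :
    Integrable (fun x : α → ℝ => eval (Sum.elim x w) p) (gam α) := by
  have h : ∀ x, eval (Sum.elim x w) p =
      eval x (aeval (Sum.elim X (fun j => C (w j)) : α ⊕ β → MvPolynomial α ℝ) p) := by
    intro x
    induction p using MvPolynomial.induction_on with
    | C a => simp
    | add p q hp hq => simp only [map_add, hp, hq]
    | mul_X p i hp =>
      simp only [map_mul, hp]
      cases i <;> simp
  simp only [h]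
  exact gam_integrable _

lemma gam_right_integrable (p : MvPolynomial (α ⊕ β) ℝ) (w : α → ℝ) :
    Integrable (fun x : β → ℝ => eval (Sum.elim w x) p) (gam β) := by
  have h : ∀ x, eval (Sum.elim w x) p =
      eval x (aeval (Sum.elim (fun j => C (w j)) X : α ⊕ β → MvPolynomial β ℝ) p) := by
    intro x
    induction p using MvPolynomial.induction_on with
    | C a => simp
    | add p q hp hq => simp only [map_add, hp, hq]
    | mul_X p i hp =>
      simp only [map_mul, hp]
      cases i <;> simp
  simp only [h]
  exact gam_integrable _

lemma gamE_swap (p : MvPolynomial (α ⊕ β) ℝ) :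
    gamE (α ⊕ β) p = ∫ w, ∫ x, eval (Sum.elim x w) p ∂(gam α) ∂(gam β) := by
  rw [gamE_prod, integral_prod_symm _ (gam_prod_integrable p)]

lemma gamE_tri (p : MvPolynomial (α ⊕ (β ⊕ β)) ℝ) :
    gamE (α ⊕ (β ⊕ β)) p = ∫ x, ∫ y, ∫ z, eval (Sum.elim x (Sum.elim y z)) p
      ∂(gam β) ∂(gam β) ∂(gam α) := by
  rw [gamE_prod, integral_prod _ (gam_prod_integrable p)]
  congr 1
  ext x
  have h := gam_right_integrable p x
  rw [← gam_mp.map_eq, integral_map gam_mp.measurable.aemeasurable, integral_prod]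
  · rw [← gam_mp.map_eq] at h
    exact h.comp_measurable gam_mp.measurable
  · rw [gam_mp.map_eq]; exact h.aestronglyMeasurable

lemma gam_jensen (p : MvPolynomial (α ⊕ β) ℝ) (w : β → ℝ) :
    (∫ x, eval (Sum.elim x w) p ∂(gam α)) ^ 2 ≤ ∫ x, eval (Sum.elim x w) (p ^ 2) ∂(gam α) := by
  have h1 := gam_left_integrable p w
  have h2 := gam_left_integrable (p ^ 2) w
  simp only [map_pow] at h2 ⊢
  have hm : MemLp (fun x : α → ℝ => eval (Sum.elim x w) p) 2 (gam α) :=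
    (memLp_two_iff_integrable_sq h1.aestronglyMeasurable).2 h2
  have := variance_nonneg (fun x : α → ℝ => eval (Sum.elim x w) p) (gam α)
  rw [variance_eq_sub hm] at this
  simp only [Pi.pow_apply] at this
  linarith

lemma var_le {Ω : Type} [MeasurableSpace Ω] (μ : Measure Ω) [IsProbabilityMeasure μ] (g : Ω → ℝ)
    (hg : MemLp g 2 μ) :
    variance g μ = (1 / 2) * ∫ w : Ω × Ω, (g w.1 - g w.2) ^ 2 ∂(μ.prod μ) := by
  have hi : Integrable g μ := hg.integrable one_le_two
  have hs : Integrable (fun x => g x ^ 2) μ := hg.integrable_sq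
  have e : ∀ w : Ω × Ω, (g w.1 - g w.2) ^ 2 = g w.1 ^ 2 + g w.2 ^ 2 - 2 * (g w.1 * g w.2) :=
    fun w => by ring
  simp only [e]
  have hadd : Integrable (fun w : Ω × Ω => g w.1 ^ 2 + g w.2 ^ 2) (μ.prod μ) :=
    (hs.comp_fst μ).add (hs.comp_snd μ)
  rw [integral_sub hadd ((hi.mul_prod hi).const_mul 2),
    integral_add (hs.comp_fst μ) (hs.comp_snd μ), integral_const_mul, integral_prod_mul,
    integral_fun_fst (fun x => g x ^ 2), integral_fun_snd (fun x => g x ^ 2), variance_eq_sub hg]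
  simp only [Pi.pow_apply, probReal_univ, one_smul]
  ring

lemma lowDeg_of_totalDegree {p : MvPolynomial σ ℝ} {d : ℕ} (h : p.totalDegree ≤ d) :
    lowDeg (d + 1) p := by
  intro m hm
  apply coeff_eq_zero_of_totalDegree_lt
  rw [Finsupp.degree] at hm
  exact lt_of_le_of_lt h hm

lemma gam_inner_integrable (p : MvPolynomial (α ⊕ β) ℝ) :
    Integrable (fun w => ∫ x, eval (Sum.elim x w) p ∂(gam α)) (gam β) :=
  (gam_prod_integrable p).integral_prod_right

lemma final_arith (v P A B Q c c' : ℝ) (hA : 0 ≤ A) (hQ : 0 ≤ Q) (h1 : v ≤ (1 / 2) * P)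
    (h2 : P ≤ c * (A * B)) (h3 : B ≤ 4 * Q) (hc : 0 ≤ c) (h4 : 2 * c ≤ c') :
    v ≤ c' * A * Q := by
  have e1 : c * (A * B) ≤ c * (A * (4 * Q)) := by gcongr
  have e2 : 2 * c * (A * Q) ≤ c' * (A * Q) := by gcongr
  linarith

lemma main_bound (q : MvPolynomial (α ⊕ β) ℝ) (d : ℕ) (hq : q.totalDegree ≤ d) :
    variance (fun Y => ∫ X, (eval (Sum.elim X Y) q) ^ 2 ∂(gam α)) (gam β) ≤
      144 ^ d * (∫ X, ∫ Y, ∫ Z, (eval (Sum.elim X Y) q - eval (Sum.elim X Z) q) ^ 2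
              ∂(gam β) ∂(gam β) ∂(gam α)) *
            (∫ X, ∫ Y, (eval (Sum.elim X Y) q) ^ 2 ∂(gam β) ∂(gam α)) := by
  set g : (β → ℝ) → ℝ := fun Y => ∫ X, (eval (Sum.elim X Y) q) ^ 2 ∂(gam α) with hg
  have hE : GaussE (gamE (α ⊕ (β ⊕ β))) := gamE_gauss
  set E := gamE (α ⊕ (β ⊕ β)) with hEdef
  set q1 : MvPolynomial (α ⊕ (β ⊕ β)) ℝ := rename (Sum.map id Sum.inl) q with hq1
  set q2 : MvPolynomial (α ⊕ (β ⊕ β)) ℝ := rename (Sum.map id Sum.inr) q with hq2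
  have ev1 : ∀ (x : α → ℝ) (w : β ⊕ β → ℝ),
      eval (Sum.elim x w) q1 = eval (Sum.elim x (w ∘ Sum.inl)) q := by
    intro x w; rw [hq1, eval_rename]
    congr 2
    ext i
    cases i <;> rfl
  have ev2 : ∀ (x : α → ℝ) (w : β ⊕ β → ℝ),
      eval (Sum.elim x w) q2 = eval (Sum.elim x (w ∘ Sum.inr)) q := by
    intro x w; rw [hq2, eval_rename]
    congr 2
    ext i
    cases i <;> rfl
  have d1 : lowDeg (d + 1) q1 := lowDeg_of_totalDegree ((totalDegree_rename_le _ _).trans hq)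
  have d2 : lowDeg (d + 1) q2 := lowDeg_of_totalDegree ((totalDegree_rename_le _ _).trans hq)
  set Q := ∫ X, ∫ Y, (eval (Sum.elim X Y) q) ^ 2 ∂(gam β) ∂(gam α) with hQ
  have eA : (∫ X, ∫ Y, ∫ Z, (eval (Sum.elim X Y) q - eval (Sum.elim X Z) q) ^ 2
              ∂(gam β) ∂(gam β) ∂(gam α)) = E ((q1 - q2) ^ 2) := by
    rw [hEdef, gamE_tri]
    simp only [map_pow, map_sub, ev1, ev2, Sum.elim_comp_inl, Sum.elim_comp_inr]
  have eQ1 : E (q1 ^ 2) = Q := by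
    rw [hEdef, gamE_tri]
    simp only [map_pow, ev1, Sum.elim_comp_inl]
    simp [hQ]
  have eQ2 : E (q2 ^ 2) = Q := by
    rw [hEdef, gamE_tri]
    simp only [map_pow, ev2, Sum.elim_comp_inr]
    simp [hQ]
  rw [eA]
  have hA := hE.sqE_nonneg (q1 - q2)
  have hB := hE.sqE_nonneg (q1 + q2)
  have hQ0 : 0 ≤ Q := eQ1 ▸ hE.sqE_nonneg q1
  have hB4 : E ((q1 + q2) ^ 2) ≤ 4 * Q := by
    have : 4 * Q = E ((2 : ℝ) • (q1 ^ 2 + q2 ^ 2)) := by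
      rw [map_smul, map_add, eQ1, eQ2, smul_eq_mul]; ring
    rw [this]
    apply hE.mono
    intro x
    simp only [map_pow, map_add, smul_eval]
    nlinarith [sq_nonneg (eval x q1 - eval x q2)]
  have hab : E (((q1 - q2) * (q1 + q2)) ^ 2) ≤
      72 ^ d * (E ((q1 - q2) ^ 2) * E ((q1 + q2) ^ 2)) :=
    hE.prod_bound d _ _ (d1.sub d2) (d1.add d2)
  have hmeas : AEStronglyMeasurable g (gam β) := by
    have := (gam_inner_integrable (q ^ 2)).aestronglyMeasurable
    simpa only [map_pow] using this
  have key : variance g (gam β) ≤ (1 / 2) * E (((q1 - q2) * (q1 + q2)) ^ 2) := by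
    by_cases hm : MemLp g 2 (gam β)
    swap
    · rw [variance_of_not_memLp hmeas hm]
      have := hE.sqE_nonneg ((q1 - q2) * (q1 + q2))
      positivity
    rw [var_le _ _ hm]
    refine mul_le_mul_of_nonneg_left ?_ (by norm_num)
    have hintg : Integrable (fun w => ∫ x, eval (Sum.elim x w) (((q1 - q2) * (q1 + q2)) ^ 2) ∂(gam α))
      (gam (β ⊕ β)) := gam_inner_integrable _
    rw [hEdef, gamE_swap, ← gam_mp.map_eq, integral_map gam_mp.measurable.aemeasurable]
    rotate_left
    · rw [gam_mp.map_eq]; exact hintg.aestronglyMeasurable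
    refine integral_mono_of_nonneg (ae_of_all _ fun w => sq_nonneg _) ?_ (ae_of_all _ fun w => ?_)
    · rw [← gam_mp.map_eq] at hintg
      exact hintg.comp_measurable gam_mp.measurable
    · refine le_trans (le_of_eq ?_) (gam_jensen _ _)
      have i1 := gam_left_integrable (q ^ 2) w.1
      have i2 := gam_left_integrable (q ^ 2) w.2
      simp only [map_pow] at i1 i2
      simp only [hg]
      rw [← integral_sub i1 i2]
      congr 1
      congr 1
      ext x
      simp only [map_mul, map_sub, map_add, ev1, ev2, Sum.elim_comp_inl, Sum.elim_comp_inr]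
      ring
  rcases Nat.eq_zero_or_pos d with h0 | h0
  · have hz : q1 - q2 = 0 := by
      subst h0
      have := totalDegree_eq_zero_iff_eq_C.1 (Nat.le_zero.1 hq)
      rw [hq1, hq2, this]; simp
    rw [hz] at key ⊢
    simpa using key
  · have h72 : (2 : ℝ) * 72 ^ d ≤ 144 ^ d := by
      have : (144 : ℝ) ^ d = 2 ^ d * 72 ^ d := by rw [← mul_pow]; norm_num
      rw [this]
      gcongr
      exact le_self_pow₀ (by norm_num) h0.ne'
    exact final_arith _ _ _ _ _ _ _ hA hQ0 key hab hB4 (by positivity) h72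

end Concrete
/-- Variance bound for partial square averages of a polynomial:
`Var_Y(E_X[q(X,Y)²]) ≤ C^d E[(q(X,Y)−q(X,Z))²] E[q(X,Y)²]`. -/
theorem stmt11 :
    ∃ C > (0:ℝ),
      ∀ (n₁ n₂ d : ℕ) (q : MvPolynomial (Fin n₁ ⊕ Fin n₂) ℝ), q.totalDegree ≤ d →
        variance (fun Y => ∫ X, (MvPolynomial.eval (Sum.elim X Y) q) ^ 2 ∂(stdGaussian n₁))
            (stdGaussian n₂) ≤
          C ^ d *
            (∫ X, ∫ Y, ∫ Z, (MvPolynomial.eval (Sum.elim X Y) q -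
                MvPolynomial.eval (Sum.elim X Z) q) ^ 2
              ∂(stdGaussian n₂) ∂(stdGaussian n₂) ∂(stdGaussian n₁)) *
            (∫ X, ∫ Y, (MvPolynomial.eval (Sum.elim X Y) q) ^ 2
              ∂(stdGaussian n₂) ∂(stdGaussian n₁)) := by
  exact ⟨144, by norm_num, fun n₁ n₂ d q hq => main_bound q d hq⟩
end

section
/- There exist absolute constants c₀ ∈ (0,1) and C > 1 such that for every positive integer d and every real θ with 0 < θ ≤ c₀/d, there exist real numbers c_0, c_1, …, c_{2d+1}, not all zero, with |c_m| ≤ C^d for every m and with Σ_{m=0}^{2d+1} c_m = 0, such that for every polynomial p of degree at most d on ℝ^n and every X ∈ ℝ^n, Σ_{m=0}^{2d+1} c_m · (A^θ)^m p(X) = 0. -/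
open MeasureTheory ProbabilityTheory

/-- Span of the monomial functions of degree `< k`. -/
noncomputable def polyW (n k : ℕ) : Submodule ℝ ((Fin n → ℝ) → ℝ) :=
  Submodule.span ℝ {f | ∃ a : Fin n → ℕ, ∑ i, a i < k ∧ f = fun X => ∏ i, X i ^ a i}

lemma polyW_mono {n k l : ℕ} (h : k ≤ l) : polyW n k ≤ polyW n l := by
  apply Submodule.span_mono
  rintro f ⟨a, ha, rfl⟩
  exact ⟨a, ha.trans_le h, rfl⟩

lemma polyW_zero {n : ℕ} {f : (Fin n → ℝ) → ℝ} (h : f ∈ polyW n 0) : f = 0 := by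
  have : polyW n 0 = ⊥ := by
    rw [polyW, Submodule.span_eq_bot]
    rintro f ⟨a, ha, rfl⟩
    omega
  rw [this] at h
  simpa using h

lemma polyW_mul {n k l : ℕ} {f g : (Fin n → ℝ) → ℝ} (hf : f ∈ polyW n k)
    (hg : g ∈ polyW n (l + 1)) : f * g ∈ polyW n (k + l) := by
  have h1 : f * g ∈ polyW n k * polyW n (l + 1) := Submodule.mul_mem_mul hf hg
  rw [polyW, polyW, Submodule.span_mul_span] at h1
  refine Submodule.span_mono ?_ h1
  rintro _ ⟨f, ⟨a, ha, rfl⟩, g, ⟨b, hb, rfl⟩, rfl⟩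
  refine ⟨a + b, ?_, ?_⟩
  · simp only [Pi.add_apply, Finset.sum_add_distrib]
    omega
  · funext X
    simp [pow_add, Finset.prod_mul_distrib]

lemma polyW_coord {n : ℕ} (i : Fin n) (j k : ℕ) (h : j < k) :
    (fun X : Fin n → ℝ => X i ^ j) ∈ polyW n k := by
  apply Submodule.subset_span
  refine ⟨Pi.single i j, ?_, ?_⟩
  · simpa using h
  · funext X
    rw [Finset.prod_eq_single i]
    · simp
    · intro b _ hb
      simp [Pi.single_eq_of_ne hb]
    · simp

lemma gauss_pow_int (a : ℕ) : Integrable (fun y : ℝ => y ^ a) (gaussianReal 0 1) := by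
  have h := memLp_id_gaussianReal (μ := 0) (v := 1) (a : NNReal)
  have := h.integrable_norm_pow'
  rw [← integrable_norm_iff (by fun_prop)]
  simpa using this

lemma affine_pow_int (u s : ℝ) (a : ℕ) :
    Integrable (fun y : ℝ => (u + s * y) ^ a) (gaussianReal 0 1) := by
  simp only [add_pow, mul_pow]
  refine integrable_finsetSum _ fun j _ => ?_
  exact (((gauss_pow_int (a - j)).const_mul (s ^ (a - j))).const_mul (u ^ j)).mul_const _

lemma coord_avg {n : ℕ} (θ : ℝ) (i : Fin n) (a : ℕ) :
    (fun X : Fin n → ℝ => (∫ y, (Real.cos θ * X i + Real.sin θ * y) ^ a ∂(gaussianReal 0 1))) -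
      (Real.cos θ ^ a) • (fun X : Fin n → ℝ => X i ^ a) ∈ polyW n a := by
  have : (fun X : Fin n → ℝ =>
        (∫ y, (Real.cos θ * X i + Real.sin θ * y) ^ a ∂(gaussianReal 0 1))) -
      (Real.cos θ ^ a) • (fun X : Fin n → ℝ => X i ^ a) =
      ∑ j ∈ Finset.range a, (Real.cos θ ^ j * (Real.sin θ ^ (a - j) *
        (∫ y, y ^ (a - j) ∂(gaussianReal 0 1)) * (a.choose j))) • (fun X : Fin n → ℝ => X i ^ j) := by
    funext X
    simp only [Pi.sub_apply, Pi.smul_apply, Finset.sum_apply, smul_eq_mul, add_pow, mul_pow]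
    rw [integral_finsetSum]
    · rw [Finset.sum_range_succ]
      simp only [integral_mul_const, integral_const_mul]
      simp only [Nat.sub_self, pow_zero, Nat.choose_self]
      simp only [integral_const, probReal_univ, smul_eq_mul, Nat.cast_one, mul_one,
        add_sub_cancel_right]
      apply Finset.sum_congr rfl
      intro j _
      ring
    · intro j _
      exact (((gauss_pow_int (a - j)).const_mul _).const_mul _).mul_const _
  rw [this]
  refine Submodule.sum_mem _ fun j hj => Submodule.smul_mem _ _ ?_
  exact polyW_coord i j a (Finset.mem_range.1 hj)

lemma prod_avg {n : ℕ} (c : ℝ) (a : Fin n → ℕ) (g : Fin n → (Fin n → ℝ) → ℝ)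
    (hg : ∀ i, g i - (c ^ a i) • (fun X : Fin n → ℝ => X i ^ a i) ∈ polyW n (a i))
    (s : Finset (Fin n)) :
    (∏ i ∈ s, g i) - (c ^ (∑ i ∈ s, a i)) • (∏ i ∈ s, fun X : Fin n → ℝ => X i ^ a i)
        ∈ polyW n (∑ i ∈ s, a i) ∧
      (∏ i ∈ s, fun X : Fin n → ℝ => X i ^ a i) ∈ polyW n (∑ i ∈ s, a i + 1) := by
  classical
  induction s using Finset.induction_on with
  | empty =>
    constructor
    · simp
    · apply Submodule.subset_span
      exact ⟨0, by simp, by funext X; simp⟩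
  | insert i s hi ih =>
    obtain ⟨h1, h2⟩ := ih
    have hx := polyW_coord i (a i) (a i + 1) (Nat.lt_succ_self _)
    have hg1 : g i ∈ polyW n (a i + 1) := by
      have := Submodule.add_mem _ (polyW_mono (Nat.le_succ _) (hg i))
        (Submodule.smul_mem _ (c ^ a i) hx)
      simpa using this
    rw [Finset.prod_insert hi, Finset.prod_insert hi, Finset.sum_insert hi]
    constructor
    · have e1 := polyW_mul h1 hg1
      have e2 := polyW_mul (hg i) (Submodule.smul_mem _ (c ^ (∑ i ∈ s, a i)) h2)
      rw [add_comm] at e1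
      have e3 := Submodule.add_mem _ e1 e2
      convert e3 using 1
      funext X
      simp only [Pi.sub_apply, Pi.add_apply, Pi.mul_apply, Pi.smul_apply, smul_eq_mul, pow_add]
      ring
    · have := polyW_mul hx h2
      refine polyW_mono (le_of_eq ?_) (polyW_mul h2 hx |> fun h => by rwa [mul_comm] at h)
      ring

lemma noisy_int {n k : ℕ} (θ : ℝ) {f : (Fin n → ℝ) → ℝ} (hf : f ∈ polyW n k) (X : Fin n → ℝ) :
    Integrable (fun Y => f (noisy θ Y X)) (_root_.stdGaussian n) := by
  induction hf using Submodule.span_induction with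
  | mem f h =>
    obtain ⟨a, -, rfl⟩ := h
    unfold _root_.stdGaussian
    exact Integrable.fintype_prod (f := fun i y => (Real.cos θ * X i + Real.sin θ * y) ^ a i)
      fun i => affine_pow_int _ _ _
  | zero => simp
  | add f g _ _ hf hg => exact hf.add hg
  | smul c f _ hf => exact hf.const_mul c

lemma avgOp_add {n k : ℕ} (θ : ℝ) {f g : (Fin n → ℝ) → ℝ} (hf : f ∈ polyW n k)
    (hg : g ∈ polyW n k) : avgOp n θ (f + g) = avgOp n θ f + avgOp n θ g := by
  funext X
  exact integral_add (noisy_int θ hf X) (noisy_int θ hg X)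

lemma avgOp_smul {n : ℕ} (θ c : ℝ) (f : (Fin n → ℝ) → ℝ) :
    avgOp n θ (c • f) = c • avgOp n θ f := by
  funext X
  exact integral_const_mul c _

lemma avgOp_lower {n k : ℕ} (θ : ℝ) {f : (Fin n → ℝ) → ℝ} (hf : f ∈ polyW n (k + 1)) :
    avgOp n θ f - (Real.cos θ ^ k) • f ∈ polyW n k := by
  unfold polyW at hf
  induction hf using Submodule.span_induction with
  | mem f h =>
    obtain ⟨a, ha, rfl⟩ := h
    have h := (prod_avg (Real.cos θ) a _ (fun i => coord_avg θ i (a i)) Finset.univ)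
    have e1 : avgOp n θ (fun X => ∏ i, X i ^ a i) = ∏ i, fun X : Fin n → ℝ =>
        (∫ y, (Real.cos θ * X i + Real.sin θ * y) ^ a i ∂(gaussianReal 0 1)) := by
      funext X
      rw [Finset.prod_apply]
      exact integral_fintype_prod_eq_prod (μ := fun _ : Fin n => gaussianReal 0 1)
        (fun i y => (Real.cos θ * X i + Real.sin θ * y) ^ a i)
    have e2 : (∏ i, fun X : Fin n → ℝ => X i ^ a i) = fun X => ∏ i, X i ^ a i := by
      funext X
      rw [Finset.prod_apply]
    rw [← e1, e2] at h
    obtain ⟨h1, h2⟩ := h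
    rcases Nat.lt_succ_iff_lt_or_eq.1 ha with hl | hl
    · have h2' := polyW_mono (show ∑ i, a i + 1 ≤ k from hl) h2
      have h1' := polyW_mono hl.le h1
      have := Submodule.add_mem _ h1' (Submodule.smul_mem _
        (Real.cos θ ^ (∑ i, a i) - Real.cos θ ^ k) h2')
      convert this using 1
      rw [sub_smul]
      abel
    · rwa [hl] at h1
  | zero =>
    have : avgOp n θ 0 = 0 := by funext X; simp [avgOp]
    simp [this]
  | add f g hf hg ihf ihg =>
    rw [avgOp_add θ hf hg]
    convert Submodule.add_mem _ ihf ihg using 1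
    rw [smul_add]
    abel
  | smul c f hf ih =>
    rw [avgOp_smul]
    convert Submodule.smul_mem _ c ih using 1
    rw [smul_sub, smul_comm]

/-- The averaging operator on polynomials of degree `≤ d`. -/
noncomputable def avgT (n d : ℕ) (θ : ℝ) : polyW n (d + 1) →ₗ[ℝ] polyW n (d + 1) where
  toFun f := ⟨avgOp n θ f, by
    have := Submodule.add_mem _ (polyW_mono (Nat.le_succ _) (avgOp_lower θ f.2))
      (Submodule.smul_mem _ (Real.cos θ ^ d) f.2)
    simpa using this⟩
  map_add' f g := Subtype.ext (avgOp_add θ f.2 g.2)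
  map_smul' c f := Subtype.ext (avgOp_smul θ c (f : (Fin n → ℝ) → ℝ))

lemma avgT_pow (n d : ℕ) (θ : ℝ) (m : ℕ) (f : polyW n (d + 1)) :
    (((avgT n d θ) ^ m) f : (Fin n → ℝ) → ℝ) = (avgOp n θ)^[m] f := by
  induction m with
  | zero => simp
  | succ m ih => rw [pow_succ', Function.iterate_succ_apply', ← ih]; rfl

/-- The annihilating polynomial. -/
noncomputable def annP (θ : ℝ) : ℕ → Polynomial ℝ
  | 0 => 1
  | (k + 1) => annP θ k * (Polynomial.X - Polynomial.C (Real.cos θ ^ k))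

lemma annP_monic (θ : ℝ) (k : ℕ) : (annP θ k).Monic := by
  induction k with
  | zero => exact Polynomial.monic_one
  | succ k ih => exact ih.mul (Polynomial.monic_X_sub_C _)

lemma annP_deg (θ : ℝ) (k : ℕ) : (annP θ k).natDegree = k := by
  induction k with
  | zero => simp [annP]
  | succ k ih =>
    rw [annP, (annP_monic θ k).natDegree_mul (Polynomial.monic_X_sub_C _), ih,
      Polynomial.natDegree_X_sub_C]

lemma annP_coeff (θ : ℝ) (k m : ℕ) : |(annP θ k).coeff m| ≤ 2 ^ k := by
  induction k generalizing m with
  | zero =>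
    rw [annP, Polynomial.coeff_one]
    split_ifs <;> simp
  | succ k ih =>
    have hc : |Real.cos θ ^ k| ≤ 1 := by
      rw [abs_pow]; exact pow_le_one₀ (abs_nonneg _) (Real.abs_cos_le_one θ)
    have h2 : |(annP θ k).coeff m * Real.cos θ ^ k| ≤ 2 ^ k := by
      rw [abs_mul]
      exact (mul_le_of_le_one_right (abs_nonneg _) hc).trans (ih m)
    rw [annP, mul_sub, Polynomial.coeff_sub, Polynomial.coeff_mul_C]
    refine (abs_sub _ _).trans ?_
    have h1 : |(annP θ k * Polynomial.X).coeff m| ≤ 2 ^ k := by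
      cases m with
      | zero => simp
      | succ m => rw [Polynomial.coeff_mul_X]; exact ih m
    rw [pow_succ]
    linarith

lemma annP_eval (θ : ℝ) (k : ℕ) : (annP θ (k + 1)).eval 1 = 0 := by
  induction k with
  | zero => simp [annP]
  | succ k ih => rw [annP, Polynomial.eval_mul, ih, zero_mul]

lemma annP_ann (n d : ℕ) (θ : ℝ) (k : ℕ) (f : polyW n (d + 1))
    (hf : (f : (Fin n → ℝ) → ℝ) ∈ polyW n k) : Polynomial.aeval (avgT n d θ) (annP θ k) f = 0 := by
  induction k generalizing f with
  | zero =>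
    have : f = 0 := Subtype.ext (polyW_zero hf)
    rw [this, map_zero]
  | succ k ih =>
    rw [annP, map_mul, Module.End.mul_apply]
    apply ih
    have := avgOp_lower θ hf
    rw [map_sub, Polynomial.aeval_X, Polynomial.aeval_C, LinearMap.sub_apply,
      Module.algebraMap_end_apply]
    exact this

lemma eval_mem {n d : ℕ} (p : MvPolynomial (Fin n) ℝ) (hp : p.totalDegree ≤ d) :
    (fun W => MvPolynomial.eval W p) ∈ polyW n (d + 1) := by
  have : (fun W => MvPolynomial.eval W p) =
      ∑ a ∈ p.support, p.coeff a • (fun X : Fin n → ℝ => ∏ i, X i ^ a i) := by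
    funext W
    rw [MvPolynomial.eval_eq']
    simp
  rw [this]
  refine Submodule.sum_mem _ fun a ha => Submodule.smul_mem _ _ (Submodule.subset_span ?_)
  refine ⟨a, ?_, rfl⟩
  have h := MvPolynomial.le_totalDegree ha
  rw [Finsupp.sum_fintype _ _ (fun _ => rfl)] at h
  omega

/-- Linear relation among iterated averages of a degree-`d` polynomial:
there are bounded constants `c_0, …, c_{2d+1}`, not all zero, summing to zero,
with `Σ_m c_m (A^θ)^m p(X) = 0`. -/
theorem stmt13 :
    ∃ c₀ ∈ Set.Ioo (0:ℝ) 1, ∃ C > (1:ℝ),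
      ∀ d : ℕ, 0 < d → ∀ θ : ℝ, 0 < θ → θ ≤ c₀ / d →
        ∃ c : Fin (2*d+2) → ℝ, c ≠ 0 ∧ (∀ m, |c m| ≤ C ^ d) ∧ (∑ m, c m = 0) ∧
          ∀ (n : ℕ) (p : MvPolynomial (Fin n) ℝ), p.totalDegree ≤ d →
            ∀ X : Fin n → ℝ,
              ∑ m : Fin (2*d+2),
                c m * (avgOp n θ)^[(m : ℕ)] (fun W => MvPolynomial.eval W p) X = 0 := by
  refine ⟨1 / 2, ⟨by norm_num, by norm_num⟩, 4, by norm_num, ?_⟩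
  intro d hd θ _ _
  have hdeg : (annP θ (d + 1)).natDegree < 2 * d + 2 := by rw [annP_deg]; omega
  refine ⟨fun m => (annP θ (d + 1)).coeff m, ?_, ?_, ?_, ?_⟩
  · intro h
    have h1 := congrFun h ⟨d + 1, by omega⟩
    have h2 : (annP θ (d + 1)).coeff (d + 1) = 1 := by
      have := (annP_monic θ (d + 1)).coeff_natDegree
      rwa [annP_deg] at this
    simp [h2] at h1
  · intro m
    refine (annP_coeff θ (d + 1) m).trans ?_
    rw [show (4 : ℝ) = 2 ^ 2 by norm_num, ← pow_mul]
    exact pow_le_pow_right₀ (by norm_num) (by omega)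
  · have h := annP_eval θ d
    rw [Polynomial.eval_eq_sum_range' hdeg, Finset.sum_range] at h
    simpa using h
  · intro n p hp X
    have hm := eval_mem p hp
    have h := annP_ann n d θ (d + 1) ⟨_, hm⟩ hm
    rw [Polynomial.aeval_eq_sum_range' hdeg, Finset.sum_range] at h
    have h' := congrFun (congrArg Subtype.val h) X
    simpa [LinearMap.sum_apply, avgT_pow] using h'
end

section
/- There exists a constant C > 1 such that for every positive integer d there exists θ₀(d) > 0 with the following property: for every real θ with 0 < θ ≤ θ₀(d), there exist real numbers c_0, c_1, …, c_{4d+1} with C^{−d} ≤ |c_m| ≤ C^d for every m and Σ_{m=0}^{4d+1} c_m = 0, such that for every polynomial p of degree at most d on ℝ^n, every X ∈ ℝ^n, and every nonnegative integer ℓ, Σ_{m=0}^{4d+1} c_m · |p_θ^{(ℓ),m}(X)|_2² = 0. -/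
open MeasureTheory ProbabilityTheory

/-- `Q` has degree strictly below `k` (or vanishes). -/
def Low {R : Type} [CommRing R] {n : ℕ} (Q : MvPolynomial (Fin n) R) (k : ℕ) : Prop :=
  Q = 0 ∨ Q.totalDegree < k

section low
variable {R : Type} [CommRing R] {n : ℕ}

lemma Low.add {P Q : MvPolynomial (Fin n) R} {k : ℕ} (hP : Low P k) (hQ : Low Q k) :
    Low (P + Q) k := by
  rcases hP with rfl | hP
  · simpa using hQ
  rcases hQ with rfl | hQ
  · rw [add_zero]; exact Or.inr hP
  · exact Or.inr (lt_of_le_of_lt (MvPolynomial.totalDegree_add _ _) (max_lt hP hQ))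

lemma Low.mul {P Q : MvPolynomial (Fin n) R} {j k : ℕ} (hP : P.totalDegree ≤ j) (hQ : Low Q k) :
    Low (P * Q) (j + k) := by
  rcases hQ with rfl | hQ
  · left; simp
  · exact Or.inr (lt_of_le_of_lt (MvPolynomial.totalDegree_mul _ _) (by omega))

lemma Low.mono {Q : MvPolynomial (Fin n) R} {j k : ℕ} (hQ : Low Q j) (h : j ≤ k) : Low Q k := by
  rcases hQ with rfl | hQ
  · left; rfl
  · right; omega

lemma Low.smul {Q : MvPolynomial (Fin n) R} {k : ℕ} (a : R) (hQ : Low Q k) : Low (a • Q) k := by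
  rcases hQ with rfl | hQ
  · left; simp
  · exact Or.inr (lt_of_le_of_lt (MvPolynomial.totalDegree_smul_le _ _) hQ)

lemma Low.sum {ι : Type} (s : Finset ι) (f : ι → MvPolynomial (Fin n) R) {k : ℕ}
    (h : ∀ i ∈ s, Low (f i) k) : Low (∑ i ∈ s, f i) k := by
  classical
  induction s using Finset.induction_on with
  | empty => left; simp
  | insert a s ha ih =>
    rw [Finset.sum_insert ha]
    exact (h a (by simp)).add (ih fun i hi => h i (by simp [hi]))

lemma Low.degree_lt {Q : MvPolynomial (Fin n) R} {k : ℕ} (hQ : Low Q k) {β : Fin n →₀ ℕ}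
    (hβ : β ∈ Q.support) : β.degree < k := by
  rcases hQ with rfl | hQ
  · simp at hβ
  · exact lt_of_le_of_lt (MvPolynomial.le_totalDegree hβ) hQ

lemma totalDegree_monomial_le_degree (β : Fin n →₀ ℕ) (a : R) :
    (MvPolynomial.monomial β a).totalDegree ≤ β.degree :=
  MvPolynomial.totalDegree_monomial_le β a

lemma low_monomial (β : Fin n →₀ ℕ) (a : R) {k : ℕ} (h : β.degree < k) :
    Low (MvPolynomial.monomial β a) k :=
  Or.inr (lt_of_le_of_lt (totalDegree_monomial_le_degree β a) h)

end low

/-- The monomial function. -/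
noncomputable def mono {n : ℕ} (α : Fin n →₀ ℕ) (X : Fin n → ℝ) : ℝ := ∏ i, X i ^ α i

lemma mono_add {n : ℕ} (α β : Fin n →₀ ℕ) (X : Fin n → ℝ) :
    mono (α + β) X = mono α X * mono β X := by
  simp [mono, pow_add, Finset.prod_mul_distrib]

lemma eval_monomial_mono {n : ℕ} (α : Fin n →₀ ℕ) (a : ℝ) (X : Fin n → ℝ) :
    MvPolynomial.eval X (MvPolynomial.monomial α a) = a * mono α X := by
  rw [MvPolynomial.eval_monomial, mono, Finsupp.prod_fintype _ _ (by simp)]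

lemma mono_single {n : ℕ} (i : Fin n) (X : Fin n → ℝ) :
    mono (Finsupp.single i 1) X = X i := by
  have h := eval_monomial_mono (Finsupp.single i 1) 1 X
  rw [one_mul] at h
  rw [← h]
  exact MvPolynomial.eval_X i

abbrev RP (n : ℕ) := MvPolynomial (Fin n) ℝ

noncomputable def ev {n : ℕ} (Y X : Fin n → ℝ) : MvPolynomial (Fin n) (RP n) →+* ℝ :=
  MvPolynomial.eval₂Hom (MvPolynomial.eval Y) X

lemma ev_eq {n : ℕ} (Y X : Fin n → ℝ) (Q : MvPolynomial (Fin n) (RP n)) :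
    ev Y X Q = ∑ β ∈ Q.support, MvPolynomial.eval Y (Q.coeff β) * mono β X := by
  rw [ev, MvPolynomial.coe_eval₂Hom, MvPolynomial.eval₂_eq']
  rfl

lemma ev_monomial {n : ℕ} (Y X : Fin n → ℝ) (α : Fin n →₀ ℕ) (r : RP n) :
    ev Y X (MvPolynomial.monomial α r) = MvPolynomial.eval Y r * mono α X := by
  simp only [ev, MvPolynomial.coe_eval₂Hom, MvPolynomial.eval₂_monomial, mono]
  rw [Finsupp.prod_fintype _ _ (by simp)]

lemma expand {n : ℕ} (θ : ℝ) (α : Fin n →₀ ℕ) :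
    ∃ Q : MvPolynomial (Fin n) (RP n), Low Q α.degree ∧
      ∀ Y X, mono α (noisy θ Y X) = Real.cos θ ^ α.degree * mono α X + ev Y X Q := by
  have hadd : ∀ α β : Fin n →₀ ℕ, (∃ Q : MvPolynomial (Fin n) (RP n), Low Q α.degree ∧
      ∀ Y X, mono α (noisy θ Y X) = Real.cos θ ^ α.degree * mono α X + ev Y X Q) →
      (∃ Q : MvPolynomial (Fin n) (RP n), Low Q β.degree ∧
      ∀ Y X, mono β (noisy θ Y X) = Real.cos θ ^ β.degree * mono β X + ev Y X Q) →
      (∃ Q : MvPolynomial (Fin n) (RP n), Low Q (α + β).degree ∧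
      ∀ Y X, mono (α + β) (noisy θ Y X)
        = Real.cos θ ^ (α + β).degree * mono (α + β) X + ev Y X Q) := by
    rintro α β ⟨P, hP, hP'⟩ ⟨Q, hQ, hQ'⟩
    refine ⟨(MvPolynomial.monomial α (MvPolynomial.C (Real.cos θ ^ α.degree))) * Q +
      (MvPolynomial.monomial β (MvPolynomial.C (Real.cos θ ^ β.degree))) * P + P * Q, ?_, ?_⟩
    · rw [map_add]
      refine ((Low.mul (totalDegree_monomial_le_degree _ _) hQ).add ?_).add ?_
      · rw [add_comm]
        exact Low.mul (totalDegree_monomial_le_degree _ _) hP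
      · rcases hP with rfl | hP
        · left; simp
        · exact Low.mul hP.le hQ
    · intro Y X
      rw [mono_add, hP', hQ', mono_add, map_add, map_add, map_add, map_mul, map_mul, map_mul,
        ev_monomial, ev_monomial]
      simp only [MvPolynomial.eval_C, pow_add]
      ring
  induction α using Finsupp.induction_linear with
  | zero => exact ⟨0, Or.inl rfl, fun Y X => by simp [mono]⟩
  | add f g hf hg => exact hadd f g hf hg
  | single i b =>
    induction b with
    | zero => exact ⟨0, Or.inl rfl, fun Y X => by simp [mono]⟩
    | succ b ih =>
      rw [Finsupp.single_add]
      refine hadd _ _ ih ⟨MvPolynomial.C (MvPolynomial.C (Real.sin θ) * MvPolynomial.X i), ?_, ?_⟩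
      · right; rw [MvPolynomial.totalDegree_C]; simp
      · intro Y X
        simp [mono_single, noisy, ev]

/-- Low order part of the expansion. -/
noncomputable def lowQ {n : ℕ} (θ : ℝ) (α : Fin n →₀ ℕ) : MvPolynomial (Fin n) (RP n) :=
  (expand θ α).choose

lemma lowQ_low {n : ℕ} (θ : ℝ) (α : Fin n →₀ ℕ) : Low (lowQ θ α) α.degree :=
  (expand θ α).choose_spec.1

lemma lowQ_spec {n : ℕ} (θ : ℝ) (α : Fin n →₀ ℕ) (Y X : Fin n → ℝ) :
    mono α (noisy θ Y X) = Real.cos θ ^ α.degree * mono α X + ev Y X (lowQ θ α) :=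
  (expand θ α).choose_spec.2 Y X

instance {n : ℕ} : IsProbabilityMeasure (stdGaussian n) := by
  unfold _root_.stdGaussian; infer_instance

lemma integrable_mono {n : ℕ} (α : Fin n →₀ ℕ) : Integrable (mono α) (stdGaussian n) := by
  unfold _root_.stdGaussian
  change Integrable (fun X : Fin n → ℝ => ∏ i, X i ^ α i) _
  refine Integrable.fintype_prod (f := fun i x => x ^ α i) (fun i => ?_)
  have h := (memLp_id_gaussianReal (μ := 0) (v := 1) (α i)).integrable_norm_pow'
  refine (integrable_norm_iff (by fun_prop)).1 ?_
  simpa using h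

lemma integrable_eval {n : ℕ} (q : RP n) :
    Integrable (fun Y => MvPolynomial.eval Y q) (stdGaussian n) := by
  simp_rw [MvPolynomial.eval_eq']
  exact integrable_finsetSum _ fun β _ => (integrable_mono β).const_mul _

noncomputable def gE {n : ℕ} (q : RP n) : ℝ := ∫ Y, MvPolynomial.eval Y q ∂(stdGaussian n)

noncomputable def Qbar {n : ℕ} (θ : ℝ) (α : Fin n →₀ ℕ) : RP n :=
  ∑ β ∈ (lowQ θ α).support, MvPolynomial.monomial β (gE ((lowQ θ α).coeff β))

lemma Qbar_low {n : ℕ} (θ : ℝ) (α : Fin n →₀ ℕ) : Low (Qbar θ α) α.degree :=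
  Low.sum _ _ fun _ hβ => low_monomial _ _ ((lowQ_low θ α).degree_lt hβ)

lemma integrable_ev {n : ℕ} (X : Fin n → ℝ) (Q : MvPolynomial (Fin n) (RP n)) :
    Integrable (fun Y => ev Y X Q) (stdGaussian n) := by
  simp_rw [ev_eq]
  exact integrable_finsetSum _ fun β _ => (integrable_eval _).mul_const _

lemma integral_lowQ {n : ℕ} (θ : ℝ) (α : Fin n →₀ ℕ) (X : Fin n → ℝ) :
    ∫ Y, ev Y X (lowQ θ α) ∂(stdGaussian n) = MvPolynomial.eval X (Qbar θ α) := by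
  simp_rw [ev_eq]
  rw [integral_finsetSum _ fun β _ => (integrable_eval _).mul_const _, Qbar, map_sum]
  refine Finset.sum_congr rfl fun β _ => ?_
  rw [integral_mul_const, eval_monomial_mono, gE]

/-- The averaging operator on polynomials. -/
noncomputable def Tm {n : ℕ} (θ : ℝ) (α : Fin n →₀ ℕ) : RP n :=
  MvPolynomial.monomial α (Real.cos θ ^ α.degree) + Qbar θ α

noncomputable def T (n : ℕ) (θ : ℝ) : RP n →ₗ[ℝ] RP n :=
  (MvPolynomial.basisMonomials (Fin n) ℝ).constr ℝ (Tm θ)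

lemma T_monomial {n : ℕ} (θ : ℝ) (α : Fin n →₀ ℕ) (a : ℝ) :
    T n θ (MvPolynomial.monomial α a) = a • Tm θ α := by
  have h : MvPolynomial.monomial α a = a • (MvPolynomial.basisMonomials (Fin n) ℝ α) := by
    simp [MvPolynomial.smul_monomial]
  rw [h, map_smul, T, Module.Basis.constr_basis]

lemma T_eq {n : ℕ} (θ : ℝ) (q : RP n) :
    T n θ q = ∑ α ∈ q.support, q.coeff α • Tm θ α := by
  conv_lhs => rw [q.as_sum, map_sum]
  simp_rw [T_monomial]

lemma avgOp_eval {n : ℕ} (θ : ℝ) (q : RP n) :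
    avgOp n θ (fun W => MvPolynomial.eval W q) = fun W => MvPolynomial.eval W (T n θ q) := by
  funext X
  have h : ∀ Y, MvPolynomial.eval (noisy θ Y X) q = ∑ α ∈ q.support, q.coeff α *
      (Real.cos θ ^ α.degree * mono α X + ev Y X (lowQ θ α)) := by
    intro Y
    rw [MvPolynomial.eval_eq']
    refine Finset.sum_congr rfl fun α _ => ?_
    rw [← lowQ_spec, mono]
  have hi : ∀ α, Integrable (fun Y => Real.cos θ ^ α.degree * mono α X + ev Y X (lowQ θ α))
      (stdGaussian n) := fun α => (integrable_const _).add (integrable_ev _ _)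
  simp only [avgOp, h]
  rw [integral_finsetSum _ fun α _ => (hi α).const_mul _, T_eq, map_sum]
  refine Finset.sum_congr rfl fun α _ => ?_
  rw [integral_const_mul, integral_add (integrable_const _) (integrable_ev _ _), integral_lowQ,
    MvPolynomial.smul_eval, Tm, map_add, eval_monomial_mono]
  simp

lemma avgOp_iter {n : ℕ} (θ : ℝ) (m : ℕ) (q : RP n) :
    (avgOp n θ)^[m] (fun W => MvPolynomial.eval W q)
      = fun W => MvPolynomial.eval W ((T n θ ^ m) q) := by
  induction m generalizing q with
  | zero => simp
  | succ m ih => rw [Function.iterate_succ_apply, avgOp_eval, ih, pow_succ]; rfl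

lemma T_low {n : ℕ} (θ : ℝ) (k : ℕ) (q : RP n) (hq : Low q (k + 1)) :
    Low (T n θ q - Real.cos θ ^ k • q) k := by
  have h : T n θ q - Real.cos θ ^ k • q =
      ∑ α ∈ q.support, (q.coeff α • (Tm θ α - MvPolynomial.monomial α (Real.cos θ ^ k))) := by
    simp_rw [smul_sub]
    rw [Finset.sum_sub_distrib, ← T_eq]
    congr 1
    conv_lhs => rw [q.as_sum, Finset.smul_sum]
    refine Finset.sum_congr rfl fun α _ => ?_
    simp [MvPolynomial.smul_monomial, mul_comm]
  rw [h]
  refine Low.sum _ _ fun α hα => Low.smul _ ?_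
  have hd := hq.degree_lt hα
  have : Tm θ α - MvPolynomial.monomial α (Real.cos θ ^ k) =
      MvPolynomial.monomial α (Real.cos θ ^ α.degree - Real.cos θ ^ k) + Qbar θ α := by
    rw [Tm, map_sub]; ring
  rw [this]
  refine Low.add ?_ ((Qbar_low θ α).mono (by omega))
  rcases Nat.lt_succ_iff_lt_or_eq.1 hd with h | h
  · exact low_monomial _ _ h
  · left; simp [h]

lemma prod_kill {n : ℕ} (θ : ℝ) (k : ℕ) (q : RP n) (hq : Low q k) :
    Polynomial.aeval (T n θ) (∏ j ∈ Finset.range k,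
      (Polynomial.X - Polynomial.C (Real.cos θ ^ j))) q = 0 := by
  induction k generalizing q with
  | zero =>
    rcases hq with rfl | hq
    · simp
    · omega
  | succ k ih =>
    rw [Finset.prod_range_succ, map_mul, Module.End.mul_apply]
    apply ih
    have := T_low θ k q hq
    rw [map_sub, Polynomial.aeval_X, Polynomial.aeval_C, LinearMap.sub_apply,
      Module.algebraMap_end_apply]
    exact this

/-- Bivariate version of the characteristic polynomial. -/
noncomputable def Biv (d : ℕ) : Polynomial (Polynomial ℝ) :=
  (Polynomial.X - Polynomial.C 1) ^ (2 * d) *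
    ∏ j ∈ Finset.range (2 * d + 1), (Polynomial.X - Polynomial.C (Polynomial.X ^ j))

noncomputable def Chi (d : ℕ) (t : ℝ) : Polynomial ℝ :=
  (Polynomial.X - Polynomial.C 1) ^ (2 * d) *
    ∏ j ∈ Finset.range (2 * d + 1), (Polynomial.X - Polynomial.C (t ^ j))

lemma Chi_eq (d : ℕ) (t : ℝ) : Chi d t = (Biv d).map (Polynomial.evalRingHom t) := by
  simp [Chi, Biv, Polynomial.map_prod, Polynomial.map_mul, Polynomial.map_pow]

lemma Chi_cont (d m : ℕ) : Continuous fun t => (Chi d t).coeff m := by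
  simp_rw [Chi_eq, Polynomial.coeff_map]
  exact Polynomial.continuous _

lemma Chi_natDegree (d : ℕ) (t : ℝ) : (Chi d t).natDegree < 4 * d + 2 := by
  have h : (Chi d t).natDegree = 2 * d + (2 * d + 1) := by
    unfold Chi
    rw [Polynomial.Monic.natDegree_mul
      ((Polynomial.monic_X_sub_C _).pow _)
      (Polynomial.monic_prod_of_monic _ _ fun j _ => Polynomial.monic_X_sub_C _),
      Polynomial.natDegree_prod_of_monic _ _ fun j _ => Polynomial.monic_X_sub_C _,
      Polynomial.natDegree_pow]
    simp only [Polynomial.natDegree_X_sub_C]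
    simp
  omega

lemma Chi_one (d : ℕ) : Chi d 1 = (Polynomial.X - Polynomial.C 1) ^ (4 * d + 1) := by
  simp only [Chi, one_pow, Finset.prod_const, Finset.card_range, ← pow_add]
  congr 1; omega

lemma Chi_eval_one (d : ℕ) (t : ℝ) : (Chi d t).eval 1 = 0 := by
  simp [Chi, Polynomial.eval_prod, Finset.prod_range_succ']

lemma Chi_one_abs (d m : ℕ) : |(Chi d 1).coeff m| = ((4 * d + 1).choose m : ℝ) := by
  rw [Chi_one, sub_eq_add_neg, ← Polynomial.C_neg, Polynomial.coeff_X_add_C_pow, abs_mul]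
  simp

lemma bounds (d : ℕ) (hd : 0 < d) : ∃ θ₀ > (0:ℝ), ∀ θ : ℝ, 0 < θ → θ ≤ θ₀ →
    ∀ m : Fin (4 * d + 2), ((64:ℝ) ^ d)⁻¹ ≤ |(Chi d (Real.cos θ)).coeff m| ∧
      |(Chi d (Real.cos θ)).coeff m| ≤ 64 ^ d := by
  have h64 : (64:ℝ) ^ d ≥ 64 := by
    calc (64:ℝ) = 64 ^ 1 := by norm_num
      _ ≤ 64 ^ d := pow_le_pow_right₀ (by norm_num) hd
  have hev : ∀ᶠ θ in nhds (0:ℝ), ∀ m : Fin (4 * d + 2),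
      ((64:ℝ) ^ d)⁻¹ < |(Chi d (Real.cos θ)).coeff m| ∧
      |(Chi d (Real.cos θ)).coeff m| < 64 ^ d := by
    rw [Filter.eventually_all]
    intro m
    have hc : Continuous fun θ => |(Chi d (Real.cos θ)).coeff m| :=
      ((Chi_cont d m).comp Real.continuous_cos).abs
    have h0 : |(Chi d (Real.cos 0)).coeff m| = ((4 * d + 1).choose m : ℝ) := by
      rw [Real.cos_zero, Chi_one_abs]
    have h1 : (1:ℝ) ≤ ((4 * d + 1).choose m : ℝ) := by
      exact_mod_cast Nat.choose_pos (by omega)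
    have h2 : ((4 * d + 1).choose m : ℝ) < 64 ^ d := by
      have : (4 * d + 1).choose m < 64 ^ d := by
        calc (4 * d + 1).choose m ≤ 2 ^ (4 * d + 1) := Nat.choose_le_two_pow _ _
          _ < 2 ^ (6 * d) := Nat.pow_lt_pow_right (by norm_num) (by omega)
          _ = 64 ^ d := by rw [pow_mul]; norm_num
      exact_mod_cast this
    refine (hc.continuousAt.eventually (lt_mem_nhds ?_)).and
      (hc.continuousAt.eventually (gt_mem_nhds ?_))
    · beta_reduce; rw [h0]
      refine lt_of_lt_of_le ?_ h1
      exact inv_lt_one_of_one_lt₀ (by linarith)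
    · beta_reduce; rw [h0]; exact h2
  obtain ⟨ε, hε, h⟩ := Metric.eventually_nhds_iff.1 hev
  refine ⟨ε / 2, by positivity, fun θ h0 h1 m => ?_⟩
  have := h (y := θ) (by rw [Real.dist_eq, sub_zero, abs_of_pos h0]; linarith) m
  exact ⟨this.1.le, this.2.le⟩

/-- Exponents of degree at most `d`. -/
noncomputable def expS (n d : ℕ) : Finset (Fin n →₀ ℕ) :=
  (Finsupp.finite_of_degree_le (σ := Fin n) d).toFinset

lemma mem_expS {n d : ℕ} {α : Fin n →₀ ℕ} : α ∈ expS n d ↔ α.degree ≤ d := by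
  simp [expS]

/-- Coefficients of the noisy derivative of a monomial. -/
noncomputable def hc {n : ℕ} (θ : ℝ) (α β : Fin n →₀ ℕ) (YZ : (Fin n → ℝ) × (Fin n → ℝ)) : ℝ :=
  (MvPolynomial.eval YZ.1 ((lowQ θ α).coeff β) - MvPolynomial.eval YZ.2 ((lowQ θ α).coeff β)) / θ

lemma ev_eq_sum {n d : ℕ} (θ : ℝ) {α : Fin n →₀ ℕ} (hα : α ∈ expS n d) (Y X : Fin n → ℝ) :
    ev Y X (lowQ θ α) =
      ∑ β ∈ expS n d, MvPolynomial.eval Y ((lowQ θ α).coeff β) * mono β X := by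
  rw [ev_eq]
  apply Finset.sum_subset
  · intro β hβ
    have := (lowQ_low θ α).degree_lt hβ
    rw [mem_expS] at *
    omega
  · intro β _ hβ
    rw [MvPolynomial.notMem_support_iff.1 hβ]
    simp

lemma noisyDeriv_sum {n d : ℕ} (θ : ℝ) (a : (Fin n →₀ ℕ) → ℝ)
    (YZ : (Fin n → ℝ) × (Fin n → ℝ)) :
    noisyDeriv θ YZ.1 YZ.2 (fun W => ∑ α ∈ expS n d, a α * mono α W) =
      fun W => ∑ β ∈ expS n d, (∑ α ∈ expS n d, a α * hc θ α β YZ) * mono β W := by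
  funext W
  simp only [noisyDeriv]
  rw [← Finset.sum_sub_distrib, Finset.sum_div]
  simp_rw [Finset.sum_mul]
  rw [Finset.sum_comm]
  refine Finset.sum_congr rfl fun α hα => ?_
  rw [lowQ_spec, lowQ_spec, ev_eq_sum θ hα, ev_eq_sum θ hα, ← mul_sub, add_sub_add_left_eq_sub,
    ← Finset.sum_sub_distrib, mul_div_assoc, Finset.sum_div, Finset.mul_sum]
  refine Finset.sum_congr rfl fun β _ => ?_
  rw [hc]; ring

lemma integrable_hc {n : ℕ} (θ : ℝ) (α β α' β' : Fin n →₀ ℕ) :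
    Integrable (fun YZ => hc θ α β YZ * hc θ α' β' YZ)
      ((stdGaussian n).prod (stdGaussian n)) := by
  set p := (lowQ θ α).coeff β with hp
  set q := (lowQ θ α').coeff β' with hq
  have e : (fun YZ : (Fin n → ℝ) × (Fin n → ℝ) => hc θ α β YZ * hc θ α' β' YZ) = fun YZ =>
      ((MvPolynomial.eval YZ.1 (p * q) + MvPolynomial.eval YZ.2 (p * q)
        - MvPolynomial.eval YZ.1 p * MvPolynomial.eval YZ.2 q)
        - MvPolynomial.eval YZ.1 q * MvPolynomial.eval YZ.2 p) / (θ * θ) := by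
    funext YZ
    rw [hc, hc, ← hp, ← hq, map_mul, map_mul, div_mul_div_comm]
    congr 1; ring
  rw [e]
  refine Integrable.div_const ?_ _
  exact ((((integrable_eval (p * q)).comp_fst _).add ((integrable_eval (p * q)).comp_snd _)).sub
    ((integrable_eval p).mul_prod (integrable_eval q))).sub
    ((integrable_eval q).mul_prod (integrable_eval p))

lemma quad {n : ℕ} (d : ℕ) (θ : ℝ) (ℓ : ℕ) :
    ∃ b : (Fin n →₀ ℕ) → (Fin n →₀ ℕ) → RP n,
      (∀ β ∈ expS n d, ∀ γ ∈ expS n d, Low (b β γ) (2 * d + 1)) ∧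
      ∀ (a : (Fin n →₀ ℕ) → ℝ) (X : Fin n → ℝ),
        derivNormSq n θ ℓ (fun W => ∑ α ∈ expS n d, a α * mono α W) X =
          ∑ β ∈ expS n d, ∑ γ ∈ expS n d, a β * a γ * MvPolynomial.eval X (b β γ) := by
  induction ℓ with
  | zero =>
    refine ⟨fun β γ => MvPolynomial.monomial (β + γ) 1, ?_, ?_⟩
    · intro β hβ γ hγ
      apply low_monomial
      rw [mem_expS] at hβ hγ
      rw [map_add]; omega
    · intro a X
      rw [derivNormSq, pow_two, Finset.sum_mul_sum]
      refine Finset.sum_congr rfl fun β _ => Finset.sum_congr rfl fun γ _ => ?_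
      rw [eval_monomial_mono, mono_add]; ring
  | succ ℓ ih =>
    obtain ⟨b, hb, h⟩ := ih
    refine ⟨fun α α' => ∑ β ∈ expS n d, ∑ γ ∈ expS n d,
      (∫ YZ, hc θ α β YZ * hc θ α' γ YZ ∂((stdGaussian n).prod (stdGaussian n))) • b β γ, ?_, ?_⟩
    · intro α _ α' _
      exact Low.sum _ _ fun β hβ => Low.sum _ _ fun γ hγ => Low.smul _ (hb β hβ γ hγ)
    · intro a X
      rw [derivNormSq]
      simp_rw [noisyDeriv_sum, h]
      have e : ∀ YZ : (Fin n → ℝ) × (Fin n → ℝ),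
          (∑ β ∈ expS n d, ∑ γ ∈ expS n d, (∑ α ∈ expS n d, a α * hc θ α β YZ) *
            (∑ α ∈ expS n d, a α * hc θ α γ YZ) * MvPolynomial.eval X (b β γ)) =
          ∑ α ∈ expS n d, ∑ α' ∈ expS n d, ∑ β ∈ expS n d, ∑ γ ∈ expS n d,
            (a α * a α' * MvPolynomial.eval X (b β γ)) * (hc θ α β YZ * hc θ α' γ YZ) := by
        intro YZ
        simp_rw [Finset.sum_mul_sum, Finset.sum_mul]
        calc _ = ∑ β ∈ expS n d, ∑ α ∈ expS n d, ∑ α' ∈ expS n d, ∑ γ ∈ expS n d,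
            a α * hc θ α β YZ * (a α' * hc θ α' γ YZ) * MvPolynomial.eval X (b β γ) := by
              refine Finset.sum_congr rfl fun β _ => ?_
              rw [Finset.sum_comm]
              exact Finset.sum_congr rfl fun α _ => Finset.sum_comm
          _ = _ := by
              rw [Finset.sum_comm]
              refine Finset.sum_congr rfl fun α _ => ?_
              rw [Finset.sum_comm]
              refine Finset.sum_congr rfl fun α' _ => Finset.sum_congr rfl fun β _ =>
                Finset.sum_congr rfl fun γ _ => ?_
              ring
      simp_rw [e]
      have i0 := fun α α' β γ => (integrable_hc (n := n) θ α β α' γ).const_mul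
        (a α * a α' * MvPolynomial.eval X (b β γ))
      have i1 := fun α α' β => integrable_finsetSum (expS n d) fun γ _ => i0 α α' β γ
      have i2 := fun α α' => integrable_finsetSum (expS n d) fun β _ => i1 α α' β
      have i3 := fun α => integrable_finsetSum (expS n d) fun α' _ => i2 α α'
      rw [integral_finsetSum _ fun α _ => i3 α]
      refine Finset.sum_congr rfl fun α _ => ?_
      rw [integral_finsetSum _ fun α' _ => i2 α α']
      refine Finset.sum_congr rfl fun α' _ => ?_
      rw [integral_finsetSum _ fun β _ => i1 α α' β, map_sum, Finset.mul_sum]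
      refine Finset.sum_congr rfl fun β _ => ?_
      rw [integral_finsetSum _ fun γ _ => i0 α α' β γ, map_sum, Finset.mul_sum]
      refine Finset.sum_congr rfl fun γ _ => ?_
      rw [integral_const_mul, MvPolynomial.smul_eval]
      ring

lemma derivNormSq_poly {n d : ℕ} (θ : ℝ) (ℓ : ℕ) (p : RP n) (hp : p.totalDegree ≤ d) :
    ∃ q : RP n, Low q (2 * d + 1) ∧
      derivNormSq n θ ℓ (fun W => MvPolynomial.eval W p) = fun W => MvPolynomial.eval W q := by
  obtain ⟨b, hb, h⟩ := quad (n := n) d θ ℓ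
  have e : (fun W => MvPolynomial.eval W p) =
      fun W => ∑ α ∈ expS n d, p.coeff α * mono α W := by
    funext W
    rw [MvPolynomial.eval_eq']
    apply Finset.sum_subset
    · intro β hβ
      rw [mem_expS]
      exact le_trans (MvPolynomial.le_totalDegree hβ) hp
    · intro β _ hβ
      rw [MvPolynomial.notMem_support_iff.1 hβ]
      simp
  refine ⟨∑ β ∈ expS n d, ∑ γ ∈ expS n d, (p.coeff β * p.coeff γ) • b β γ, ?_, ?_⟩
  · exact Low.sum _ _ fun β hβ => Low.sum _ _ fun γ hγ => Low.smul _ (hb β hβ γ hγ)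
  · funext X
    rw [e, h]
    simp [map_sum, MvPolynomial.smul_eval]

/-- Linear relation among the averaged derivative norms: there are constants
`c_0, …, c_{4d+1}`, bounded above and below, summing to zero, with
`Σ_m c_m |p_θ^{(ℓ),m}(X)|₂² = 0`. -/
theorem stmt14 :
    ∃ C > (1:ℝ),
      ∀ d : ℕ, 0 < d → ∃ θ₀ > (0:ℝ),
        ∀ θ : ℝ, 0 < θ → θ ≤ θ₀ →
          ∃ c : Fin (4*d+2) → ℝ,
            (∀ m, (C ^ d)⁻¹ ≤ |c m| ∧ |c m| ≤ C ^ d) ∧ (∑ m, c m = 0) ∧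
            ∀ (n : ℕ) (p : MvPolynomial (Fin n) ℝ), p.totalDegree ≤ d →
              ∀ (X : Fin n → ℝ) (ℓ : ℕ),
                ∑ m : Fin (4*d+2), c m * qlm n θ p ℓ (m : ℕ) X = 0 := by
  refine ⟨64, by norm_num, fun d hd => ?_⟩
  obtain ⟨θ₀, h0, h⟩ := bounds d hd
  refine ⟨θ₀, h0, fun θ hθ hθ' => ⟨fun m => (Chi d (Real.cos θ)).coeff m, h θ hθ hθ', ?_, ?_⟩⟩
  · have := Polynomial.eval_eq_sum_range' (Chi_natDegree d (Real.cos θ)) 1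
    rw [Chi_eval_one] at this
    rw [Fin.sum_univ_eq_sum_range (fun m => (Chi d (Real.cos θ)).coeff m)]
    simpa using this.symm
  · intro n p hp X ℓ
    obtain ⟨q, hq, hq'⟩ := derivNormSq_poly θ ℓ p hp
    simp only [qlm, hq', avgOp_iter]
    rw [Fin.sum_univ_eq_sum_range (fun m => (Chi d (Real.cos θ)).coeff m *
      MvPolynomial.eval X ((T n θ ^ m) q))]
    have hk : Polynomial.aeval (T n θ) (Chi d (Real.cos θ)) q = 0 := by
      rw [Chi, map_mul, Module.End.mul_apply, prod_kill θ _ q hq, map_zero]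
    rw [Polynomial.aeval_eq_sum_range' (Chi_natDegree d (Real.cos θ))] at hk
    have := congrArg (MvPolynomial.eval X) hk
    simpa [LinearMap.sum_apply, MvPolynomial.smul_eval] using this
end

section
/- There exists an absolute constant C > 0 such that the following holds. Let p be a polynomial of degree at most d in n variables, let B > 1 and 0 < δ < 1 be real numbers, and let X, X' ∈ ℝ^n with ‖X‖_∞ ≤ B and ‖X − X'‖_∞ < δ. Then |p(X) − p(X')| ≤ δ · |p|_2 · n^{d/2} · (C·B)^d. -/
open MeasureTheory ProbabilityTheory

open Polynomial in
/-- Real Hermite polynomials. -/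
noncomputable def He : ℕ → Polynomial ℝ
  | 0 => 1
  | (k+1) => Polynomial.X * He k - Polynomial.derivative (He k)

lemma He_deriv (k : ℕ) : Polynomial.derivative (He (k+1)) = Polynomial.C ((k:ℝ)+1) * He k := by
  induction k with
  | zero => simp [He]
  | succ k ih =>
    have e : He (k+1+1) = Polynomial.X * He (k+1) - Polynomial.derivative (He (k+1)) := rfl
    have e1 : He (k+1) = Polynomial.X * He k - Polynomial.derivative (He k) := rfl
    rw [e, Polynomial.derivative_sub, Polynomial.derivative_mul, ih, Polynomial.derivative_C_mul]
    have : Polynomial.derivative (He k) = Polynomial.X * He k - He (k+1) := by rw [e1]; ring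
    rw [this]
    simp only [Polynomial.derivative_X, Nat.cast_add, Nat.cast_one, Polynomial.C_add, Polynomial.C_1]
    ring

lemma He_rec (k : ℕ) (x : ℝ) : (He (k+2)).eval x =
    x * (He (k+1)).eval x - ((k:ℝ)+1) * (He k).eval x := by
  have e : He (k+1+1) = Polynomial.X * He (k+1) - Polynomial.derivative (He (k+1)) := rfl
  rw [e, He_deriv]
  simp

lemma He_mul_x (k : ℕ) (x : ℝ) : x * (He k).eval x =
    (He (k+1)).eval x + (k:ℝ) * (He (k-1)).eval x := by
  cases k with
  | zero => simp [He]
  | succ k => rw [He_rec]; push_cast; simp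

lemma poly_integrable (p : Polynomial ℝ) : Integrable (fun x => p.eval x) (gaussianReal 0 1) := by
  induction p using Polynomial.induction_on' with
  | add p q hp hq =>
    simp only [Polynomial.eval_add]
    exact hp.add hq
  | monomial n a =>
    simp only [Polynomial.eval_monomial]
    apply Integrable.const_mul
    have h := (memLp_id_gaussianReal (μ := 0) (v := 1) (n : NNReal))
    have := h.integrable_norm_pow' 
    simp only [id] at this
    refine (this).mono' (by fun_prop) ?_
    filter_upwards with x
    simp

lemma stein (p : Polynomial ℝ) :
    ∫ x, (Polynomial.X * p - Polynomial.derivative p).eval x ∂(gaussianReal 0 1) = 0 := by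
  have hI : ∀ q : Polynomial ℝ, Integrable (fun x => gaussianPDFReal 0 1 x * q.eval x) volume := by
    intro q
    have h := poly_integrable q
    rw [gaussianReal_of_var_ne_zero 0 one_ne_zero, gaussianPDF_def,
      integrable_withDensity_iff_integrable_smul₀' (by fun_prop) (by simp)] at h
    refine h.congr ?_
    filter_upwards with x
    simp [ENNReal.toReal_ofReal (gaussianPDFReal_nonneg 0 1 x)]
  rw [integral_gaussianReal_eq_integral_smul one_ne_zero]
  have hd : ∀ x, HasDerivAt (fun x => -(gaussianPDFReal 0 1 x * p.eval x))
      (gaussianPDFReal 0 1 x • (Polynomial.X * p - Polynomial.derivative p).eval x) x := by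
    intro x
    have h1 : HasDerivAt (fun x => gaussianPDFReal 0 1 x) (gaussianPDFReal 0 1 x * (-x)) x := by
      simp only [gaussianPDFReal_def]
      have : HasDerivAt (fun x : ℝ => -(x - 0)^2 / (2 * ((1:NNReal):ℝ))) (-x) x := by
        have := ((((hasDerivAt_id x).sub_const 0).pow 2).neg).div_const (2 * ((1:NNReal):ℝ))
        refine this.congr_deriv ?_
        simp
        ring
      have := (this.exp).const_mul ((√(2 * Real.pi * ((1:NNReal):ℝ)))⁻¹)
      refine this.congr_deriv ?_
      ring
    have h2 := p.hasDerivAt x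
    refine (h1.mul h2).neg.congr_deriv ?_
    simp
    ring
  refine integral_eq_zero_of_hasDerivAt_of_integrable hd ?_ ?_
  · exact hI (Polynomial.X * p - Polynomial.derivative p)
  · exact (hI p).neg

lemma He_ibp (k : ℕ) (f : Polynomial ℝ) :
    ∫ x, (He (k+1)).eval x * f.eval x ∂(gaussianReal 0 1) =
    ∫ x, (He k).eval x * (Polynomial.derivative f).eval x ∂(gaussianReal 0 1) := by
  have h := stein (He k * f)
  have e : (Polynomial.X * (He k * f) - Polynomial.derivative (He k * f)) =
      He (k+1) * f - He k * Polynomial.derivative f := by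
    simp only [He, Polynomial.derivative_mul]; ring
  rw [e] at h
  simp only [Polynomial.eval_sub] at h
  rw [integral_sub (poly_integrable _) (poly_integrable _)] at h
  simp only [Polynomial.eval_mul] at h
  linarith

lemma He_orth (j k : ℕ) :
    ∫ x, (He j).eval x * (He k).eval x ∂(gaussianReal 0 1) =
      if j = k then (k.factorial : ℝ) else 0 := by
  induction k generalizing j with
  | zero =>
    cases j with
    | zero => simp [He]
    | succ j => rw [He_ibp]; simp [He]
  | succ k ih =>
    cases j with
    | zero =>
      simp_rw [mul_comm ((He 0).eval _)]
      rw [He_ibp]; simp [He]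
    | succ j =>
      rw [He_ibp, He_deriv]
      have : ∀ x, (He j).eval x * (Polynomial.C ((k:ℝ)+1) * He k).eval x =
        ((k:ℝ)+1) * ((He j).eval x * (He k).eval x) := by intro x; simp; ring
      simp_rw [this]
      rw [integral_const_mul, ih]
      simp [Nat.factorial_succ]

lemma He_bound (B : ℝ) (hB : 1 < B) (x : ℝ) (hx : |x| ≤ 2*B) (k : ℕ) :
    |(He k).eval x| ≤ √(k.factorial) * (3*B)^k := by
  induction k using Nat.twoStepInduction with
  | zero => simp [He]
  | one => simp [He]; linarith
  | more k h0 h1 =>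
    rw [He_rec]
    have hs : √((k+1).factorial : ℝ) = √((k:ℝ)+1) * √(k.factorial) := by
      rw [Nat.factorial_succ]; push_cast; rw [Real.sqrt_mul (by positivity)]
    have hs2 : √((k+2).factorial : ℝ) = √((k:ℝ)+2) * √((k+1).factorial) := by
      rw [Nat.factorial_succ]; push_cast; rw [Real.sqrt_mul (by positivity)]; congr 2; ring
    have hone : 1 ≤ √((k:ℝ)+2) := Real.one_le_sqrt.2 (by linarith [(Nat.cast_nonneg k : (0:ℝ) ≤ k)])
    have hle : √((k:ℝ)+1) ≤ √((k:ℝ)+2) := Real.sqrt_le_sqrt (by linarith)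
    have hsq : √((k:ℝ)+1) * √((k:ℝ)+1) = (k:ℝ)+1 := Real.mul_self_sqrt (by positivity)
    set s := √((k:ℝ)+1)
    set t := √((k:ℝ)+2)
    set F := √(k.factorial : ℝ)
    have hs0 : 0 ≤ s := Real.sqrt_nonneg _
    have hF0 : 0 ≤ F := Real.sqrt_nonneg _
    have hP : 0 ≤ (3*B)^k := by positivity
    calc |x * (He (k+1)).eval x - ((k:ℝ)+1) * (He k).eval x|
        ≤ |x| * |(He (k+1)).eval x| + ((k:ℝ)+1) * |(He k).eval x| := by
          refine (abs_sub _ _).trans ?_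
          rw [abs_mul, abs_mul, abs_of_nonneg (by positivity : 0 ≤ (k:ℝ)+1)]
      _ ≤ (2*B) * (s * F * (3*B)^(k+1)) + ((k:ℝ)+1) * (F * (3*B)^k) := by
          rw [hs] at h1
          gcongr
      _ = (s * F * (3*B)^k) * (6*B^2 + s) := by rw [← hsq]; ring
      _ ≤ (s * F * (3*B)^k) * (t * (9*B^2)) := by
          gcongr
          nlinarith [mul_le_mul hone (le_refl (B^2)) (by positivity) (by linarith), mul_le_mul_of_nonneg_left (show 1 ≤ B^2 by nlinarith) (show 0 ≤ t by linarith)]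
      _ = _ := by rw [hs2, hs]; ring

lemma He_diff (B : ℝ) (hB : 1 < B) (x y : ℝ) (hx : |x| ≤ 2*B) (hy : |y| ≤ 2*B) (k : ℕ) :
    |(He k).eval x - (He k).eval y| ≤ k * (√(k.factorial) * (3*B)^k) * |x - y| := by
  cases k with
  | zero => simp [He]
  | succ k =>
    have := Convex.norm_image_sub_le_of_norm_hasDerivWithin_le (f := fun x => (He (k+1)).eval x)
      (f' := fun x => (Polynomial.derivative (He (k+1))).eval x) (s := Set.Icc (-(2*B)) (2*B))
      (C := ((k+1:ℕ):ℝ) * (√((k+1).factorial) * (3*B)^(k+1))) (x := y) (y := x)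
      (fun z _ => ((He (k+1)).hasDerivAt z).hasDerivWithinAt) ?_ (convex_Icc _ _)
      (abs_le.1 hy) (abs_le.1 hx)
    · simpa using this
    · intro z hz
      rw [He_deriv]
      simp only [Polynomial.eval_mul, Polynomial.eval_C, Real.norm_eq_abs, abs_mul]
      rw [abs_of_nonneg (by positivity : 0 ≤ (k:ℝ)+1)]
      push_cast
      have h := He_bound B hB z (abs_le.2 hz) k
      gcongr
      refine h.trans ?_
      gcongr
      · exact Nat.le_succ k
      · linarith
      · exact Nat.le_succ k

lemma prod_diff {ι : Type*} (s : Finset ι) (u v : ι → ℝ) (a : ι → ℕ) (w : ι → ℝ) (δ : ℝ)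
    (hw : ∀ i, 0 ≤ w i) (hδ : 0 ≤ δ)
    (hu : ∀ i, |u i| ≤ w i) (hv : ∀ i, |v i| ≤ w i) (hd : ∀ i, |u i - v i| ≤ a i * w i * δ) :
    |∏ i ∈ s, u i - ∏ i ∈ s, v i| ≤ (∑ i ∈ s, (a i : ℝ)) * (∏ i ∈ s, w i) * δ := by
  classical
  induction s using Finset.induction_on with
  | empty => simp
  | insert i s hi ih =>
    rw [Finset.prod_insert hi, Finset.prod_insert hi, Finset.prod_insert hi, Finset.sum_insert hi]
    have hU : |∏ i ∈ s, u i| ≤ ∏ i ∈ s, w i := by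
      rw [Finset.abs_prod]
      exact Finset.prod_le_prod (fun _ _ => abs_nonneg _) (fun i _ => hu i)
    have hW : 0 ≤ ∏ i ∈ s, w i := Finset.prod_nonneg fun i _ => hw i
    have hwi := hw i
    calc |u i * ∏ i ∈ s, u i - v i * ∏ i ∈ s, v i|
        = |(u i - v i) * (∏ i ∈ s, u i) + v i * (∏ i ∈ s, u i - ∏ i ∈ s, v i)| := by ring_nf
      _ ≤ |u i - v i| * |∏ i ∈ s, u i| + |v i| * |∏ i ∈ s, u i - ∏ i ∈ s, v i| := by
          refine (abs_add_le _ _).trans ?_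
          rw [abs_mul, abs_mul]
      _ ≤ (a i * w i * δ) * (∏ i ∈ s, w i) + w i * ((∑ i ∈ s, (a i : ℝ)) * (∏ i ∈ s, w i) * δ) := by
          have := hd i
          have := hv i
          gcongr
      _ = _ := by ring

/-- Multivariate Hermite. -/
noncomputable def HH {n : ℕ} (a : Fin n → ℕ) (x : Fin n → ℝ) : ℝ := ∏ i, (He (a i)).eval (x i)

/-- Multi-indices of total degree at most `d`. -/
def FF (n d : ℕ) : Finset (Fin n → ℕ) :=
  (Fintype.piFinset fun _ => Finset.range (d+1)).filter fun a => ∑ i, a i ≤ d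

lemma mem_FF {n d : ℕ} {a : Fin n → ℕ} : a ∈ FF n d ↔ ∑ i, a i ≤ d := by
  simp only [FF, Finset.mem_filter, Fintype.mem_piFinset, Finset.mem_range, and_iff_right_iff_imp]
  intro h i
  have := Finset.single_le_sum (f := a) (fun _ _ => Nat.zero_le _) (Finset.mem_univ i)
  omega

lemma card_FF (n d : ℕ) : (FF n d).card ≤ (n+1)^d := by
  induction d with
  | zero =>
    have : FF n 0 ⊆ {0} := by
      intro a ha
      rw [mem_FF] at ha
      simp only [Finset.mem_singleton]
      ext i
      have := Finset.single_le_sum (f := a) (fun _ _ => Nat.zero_le _) (Finset.mem_univ i)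
      simp only [Pi.zero_apply]
      omega
    simpa using Finset.card_le_card this
  | succ d ih =>
    have : FF n (d+1) ⊆ ((FF n d) ×ˢ (Finset.univ : Finset (Option (Fin n)))).image
        (fun q => match q.2 with
          | none => q.1
          | some i => Function.update q.1 i (q.1 i + 1)) := by
      intro a ha
      rw [mem_FF] at ha
      rw [Finset.mem_image]
      by_cases h : ∑ i, a i ≤ d
      · exact ⟨(a, none), by simp [mem_FF, h], rfl⟩
      · have : ∃ i, a i ≠ 0 := by
          by_contra! h0
          simp [h0] at h
        obtain ⟨i, hi⟩ := this
        refine ⟨(Function.update a i (a i - 1), some i), ?_, ?_⟩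
        · simp only [Finset.mem_product, Finset.mem_univ, and_true, mem_FF]
          rw [Finset.sum_update_of_mem (Finset.mem_univ i)]
          rw [← Finset.add_sum_erase _ _ (Finset.mem_univ i), Finset.erase_eq] at ha
          omega
        · simp [Nat.sub_add_cancel (Nat.pos_of_ne_zero hi)]
    refine (Finset.card_le_card this).trans (Finset.card_image_le.trans ?_)
    rw [Finset.card_product, pow_succ]
    simp only [Finset.card_univ, Fintype.card_option, Fintype.card_fin]
    gcongr

lemma HH_update {n : ℕ} (a : Fin n → ℕ) (i : Fin n) (k : ℕ) (x : Fin n → ℝ) :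
    HH (Function.update a i k) x =
      (He k).eval (x i) * ∏ j ∈ Finset.univ.erase i, (He (a j)).eval (x j) := by
  rw [HH, ← Finset.mul_prod_erase _ _ (Finset.mem_univ i)]
  congr 1
  · simp
  · refine Finset.prod_congr rfl fun j hj => ?_
    rw [Function.update_of_ne (Finset.ne_of_mem_erase hj)]

lemma HH_mul_x {n : ℕ} (a : Fin n → ℕ) (i : Fin n) (x : Fin n → ℝ) :
    x i * HH a x = HH (Function.update a i (a i + 1)) x
      + (a i : ℝ) * HH (Function.update a i (a i - 1)) x := by
  have h := HH_update a i (a i) x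
  rw [Function.update_eq_self] at h
  rw [h, HH_update, HH_update, ← mul_assoc, He_mul_x]
  ring

/-- Span of Hermite functions. -/
def SS (n d : ℕ) : Submodule ℝ ((Fin n → ℝ) → ℝ) := Submodule.span ℝ (HH '' (FF n d : Set (Fin n → ℕ)))

lemma HH_mem {n d : ℕ} {a : Fin n → ℕ} (h : ∑ i, a i ≤ d) : HH a ∈ SS n d :=
  Submodule.subset_span ⟨a, by simpa using mem_FF.2 h, rfl⟩

lemma SS_mono {n d e : ℕ} (h : d ≤ e) : SS n d ≤ SS n e := by
  refine Submodule.span_mono (Set.image_mono ?_)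
  intro a ha
  simp only [Finset.mem_coe, mem_FF] at ha ⊢
  omega

lemma SS_mul {n d : ℕ} (i : Fin n) (f : (Fin n → ℝ) → ℝ) (hf : f ∈ SS n d) :
    (fun x => x i * f x) ∈ SS n (d+1) := by
  induction hf using Submodule.span_induction with
  | mem f hf =>
    obtain ⟨a, ha, rfl⟩ := hf
    simp only [Finset.mem_coe, mem_FF] at ha
    have e : (fun x => x i * HH a x) = HH (Function.update a i (a i + 1))
      + (a i : ℝ) • HH (Function.update a i (a i - 1)) := by
      ext x; simpa using HH_mul_x a i x
    rw [e]
    rw [← Finset.add_sum_erase _ _ (Finset.mem_univ i), Finset.erase_eq] at ha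
    refine Submodule.add_mem _ (HH_mem ?_) (Submodule.smul_mem _ _ (HH_mem ?_)) <;>
    · rw [Finset.sum_update_of_mem (Finset.mem_univ i)]; omega
  | zero =>
    convert Submodule.zero_mem (SS n (d+1)) using 1
    ext x; simp
  | add f g _ _ hf hg =>
    convert Submodule.add_mem _ hf hg using 1
    ext x; simp [mul_add]
  | smul c f _ hf =>
    convert Submodule.smul_mem _ c hf using 1
    ext x; simp; ring

lemma SS_mul_pow {n d : ℕ} (i : Fin n) (k : ℕ) (f : (Fin n → ℝ) → ℝ) (hf : f ∈ SS n d) :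
    (fun x => x i ^ k * f x) ∈ SS n (d+k) := by
  induction k with
  | zero => simpa using hf
  | succ k ih =>
    have e : (fun x : Fin n → ℝ => x i ^ (k+1) * f x) = fun x => x i * (x i ^ k * f x) := by
      funext x; ring
    rw [e]
    exact SS_mul i _ ih

lemma SS_prod {n : ℕ} (s : Finset (Fin n)) (a : Fin n → ℕ) :
    (fun x : Fin n → ℝ => ∏ i ∈ s, x i ^ a i) ∈ SS n (∑ i ∈ s, a i) := by
  induction s using Finset.induction_on with
  | empty =>
    simp only [Finset.prod_empty, Finset.sum_empty]
    convert HH_mem (n := n) (d := 0) (a := 0) (by simp) using 1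
    ext x; simp [HH, He]
  | insert i s hi ih =>
    simp only [Finset.prod_insert hi, Finset.sum_insert hi]
    rw [add_comm]
    exact SS_mul_pow i (a i) _ ih

lemma poly_mem {n d : ℕ} (p : MvPolynomial (Fin n) ℝ) (hp : p.totalDegree ≤ d) :
    (fun x => MvPolynomial.eval x p) ∈ SS n d := by
  have e : (fun x => MvPolynomial.eval x p) =
      ∑ m ∈ p.support, p.coeff m • (fun x : Fin n → ℝ => ∏ i, x i ^ m i) := by
    ext x
    rw [MvPolynomial.eval_eq']
    simp
  rw [e]
  refine Submodule.sum_mem _ fun m hm => Submodule.smul_mem _ _ (SS_mono ?_ (SS_prod _ _))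
  have := MvPolynomial.le_totalDegree hm
  rw [Finsupp.sum_fintype _ _ (by simp)] at this
  omega

lemma HH_orth {n : ℕ} (a b : Fin n → ℕ) :
    Integrable (fun x => HH a x * HH b x) (_root_.stdGaussian n) ∧
    ∫ x, HH a x * HH b x ∂(_root_.stdGaussian n) = if a = b then ∏ i, ((b i).factorial : ℝ) else 0 := by
  simp only [HH, ← Finset.prod_mul_distrib, _root_.stdGaussian]
  constructor
  · apply Integrable.fintype_prod (f := fun i y => (He (a i)).eval y * (He (b i)).eval y)
    intro i
    simpa using poly_integrable (He (a i) * He (b i))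
  · rw [integral_fintype_prod_eq_prod (fun i y => (He (a i)).eval y * (He (b i)).eval y)]
    simp_rw [He_orth]
    split_ifs with h
    · subst h; simp
    · obtain ⟨i, hi⟩ := Function.ne_iff.1 h
      exact Finset.prod_eq_zero (Finset.mem_univ i) (by simp [hi])

lemma norm_sq {n d : ℕ} (c : (Fin n → ℕ) → ℝ) :
    ∫ x, (∑ a ∈ FF n d, c a * HH a x)^2 ∂(_root_.stdGaussian n) =
      ∑ a ∈ FF n d, c a ^ 2 * ∏ i, ((a i).factorial : ℝ) := by
  have : ∀ x, (∑ a ∈ FF n d, c a * HH a x)^2 =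
      ∑ a ∈ FF n d, ∑ b ∈ FF n d, (c a * c b) * (HH a x * HH b x) := by
    intro x
    rw [sq, Finset.sum_mul_sum]
    refine Finset.sum_congr rfl fun a _ => Finset.sum_congr rfl fun b _ => by ring
  simp_rw [this]
  rw [integral_finsetSum _ fun a _ => integrable_finsetSum _ fun b _ =>
    ((HH_orth a b).1.const_mul _)]
  refine Finset.sum_congr rfl fun a ha => ?_
  rw [integral_finsetSum _ fun b _ => ((HH_orth a b).1.const_mul _)]
  simp_rw [integral_const_mul, (HH_orth a _).2]
  simp [ha, sq]

lemma HH_diff {n d : ℕ} (a : Fin n → ℕ) (ha : ∑ i, a i ≤ d) (B δ : ℝ) (hB : 1 < B) (hδ : 0 < δ)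
    (x y : Fin n → ℝ) (hx : ∀ i, |x i| ≤ 2*B) (hy : ∀ i, |y i| ≤ 2*B) (hxy : ∀ i, |x i - y i| ≤ δ) :
    (HH a x - HH a y)^2 ≤ (∏ i, ((a i).factorial : ℝ)) * (δ * (6*B)^d)^2 := by
  have h := prod_diff Finset.univ (fun i => (He (a i)).eval (x i)) (fun i => (He (a i)).eval (y i)) a
    (fun i => √((a i).factorial) * (3*B)^(a i)) δ (fun i => by positivity) hδ.le
    (fun i => He_bound B hB _ (hx i) _) (fun i => He_bound B hB _ (hy i) _)
    (fun i => (He_diff B hB _ _ (hx i) (hy i) _).trans (by have := hxy i; gcongr))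
  rw [Finset.prod_mul_distrib, Finset.prod_pow_eq_pow_sum] at h
  have hd : (∑ i, (a i : ℝ)) ≤ 2^d := by
    calc (∑ i, (a i : ℝ)) = ((∑ i, a i : ℕ) : ℝ) := by push_cast; rfl
      _ ≤ (d:ℝ) := by exact_mod_cast ha
      _ ≤ 2^d := by exact_mod_cast (Nat.lt_two_pow_self).le
  have hb : (3*B)^(∑ i, a i) ≤ (3*B)^d := pow_le_pow_right₀ (by linarith) ha
  have hP : 0 ≤ ∏ i, √((a i).factorial : ℝ) := Finset.prod_nonneg fun i _ => Real.sqrt_nonneg _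
  have h2 : |HH a x - HH a y| ≤ (∏ i, √((a i).factorial : ℝ)) * (δ * (6*B)^d) := by
    refine h.trans ?_
    calc _ ≤ 2^d * ((∏ i, √((a i).factorial : ℝ)) * (3*B)^d) * δ := by gcongr
      _ = _ := by rw [show 6*B = 2*(3*B) by ring, mul_pow 2 (3*B)]; ring
  rw [← sq_abs]
  calc _ ≤ ((∏ i, √((a i).factorial : ℝ)) * (δ * (6*B)^d))^2 := by gcongr
    _ = _ := by
      rw [mul_pow, ← Finset.prod_pow]
      simp

/-- Lipschitz-type bound: if `‖X‖_∞ ≤ B` and `‖X − X'‖_∞ < δ` then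
`|p(X) − p(X')| ≤ δ |p|₂ n^{d/2} (C B)^d`. -/
theorem stmt17 :
    ∃ C > (0:ℝ),
      ∀ (n d : ℕ) (p : MvPolynomial (Fin n) ℝ), p.totalDegree ≤ d →
        ∀ B δ : ℝ, 1 < B → 0 < δ → δ < 1 →
          ∀ X X' : Fin n → ℝ, ‖X‖ ≤ B → ‖X - X'‖ < δ →
            |MvPolynomial.eval X p - MvPolynomial.eval X' p| ≤
              δ * gaussNorm n 2 (fun W => MvPolynomial.eval W p) *
                (n : ℝ) ^ ((d : ℝ) / 2) * (C * B) ^ d := by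
  refine ⟨12, by norm_num, ?_⟩
  intro n d p hp B δ hB hδ hδ1 X X' hX hXX
  rcases Nat.eq_zero_or_pos n with rfl | hn
  · have : X = X' := Subsingleton.elim _ _
    subst this
    have : 0 ≤ gaussNorm 0 2 (fun W => MvPolynomial.eval W p) :=
      Real.rpow_nonneg (integral_nonneg fun x => by positivity) _
    simp only [sub_self, abs_zero]
    positivity
  have hx : ∀ i, |X i| ≤ B := fun i => (norm_le_pi_norm X i).trans hX
  have hxy : ∀ i, |X i - X' i| ≤ δ := fun i => (norm_le_pi_norm (X - X') i).trans hXX.le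
  have hy : ∀ i, |X' i| ≤ 2*B := by
    intro i
    have h1 := abs_le.1 (hx i)
    have h2 := abs_le.1 (hxy i)
    exact abs_le.2 ⟨by linarith, by linarith⟩
  have hx2 : ∀ i, |X i| ≤ 2*B := fun i => (hx i).trans (by linarith)
  obtain ⟨c₀, hc⟩ := Submodule.mem_span_image_finset_iff_exists_fun ℝ |>.1 (poly_mem p hp)
  obtain ⟨c, hcc⟩ : ∃ c : (Fin n → ℕ) → ℝ, ∀ a : FF n d, c₀ a = c a :=
    ⟨fun a => if h : a ∈ FF n d then c₀ ⟨a, h⟩ else 0, fun a => by simp⟩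
  simp only [hcc] at hc
  rw [Finset.sum_coe_sort (FF n d) (fun a => c a • HH a)] at hc
  have hev : ∀ x, MvPolynomial.eval x p = ∑ a ∈ FF n d, c a * HH a x := by
    intro x
    have := congrFun hc x
    simpa using this.symm
  set N := ∑ a ∈ FF n d, c a ^ 2 * ∏ i, ((a i).factorial : ℝ) with hN
  have hN0 : 0 ≤ N := Finset.sum_nonneg fun a _ => by positivity
  have hg : gaussNorm n 2 (fun W => MvPolynomial.eval W p) = √N := by
    rw [gaussNorm, Real.sqrt_eq_rpow, hN, ← norm_sq]
    simp [hev]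
  rw [hg]
  have hn1 : (1:ℝ) ≤ n := by exact_mod_cast hn
  have hcard : ((FF n d).card : ℝ) ≤ (2*n)^d := by
    calc ((FF n d).card : ℝ) ≤ ((n:ℝ)+1)^d := by exact_mod_cast card_FF n d
      _ ≤ _ := by gcongr; linarith
  have hpow : ((n:ℝ) ^ ((d:ℝ)/2))^2 = (n:ℝ)^d := by
    rw [← Real.rpow_natCast, ← Real.rpow_mul (by positivity), ← Real.rpow_natCast]
    congr 1; push_cast; ring
  apply abs_le_of_sq_le_sq _ (by positivity)
  have hCS : (MvPolynomial.eval X p - MvPolynomial.eval X' p)^2 ≤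
      N * ∑ a ∈ FF n d, (HH a X - HH a X')^2 / ∏ i, ((a i).factorial : ℝ) := by
    rw [hev, hev, ← Finset.sum_sub_distrib]
    refine Finset.sum_sq_le_sum_mul_sum_of_sq_le_mul _ (fun a _ => by positivity)
      (fun a _ => by positivity) (fun a _ => ?_)
    have : (∏ i, ((a i).factorial : ℝ)) ≠ 0 := by positivity
    apply le_of_eq
    field_simp
  have hsum : ∑ a ∈ FF n d, (HH a X - HH a X')^2 / ∏ i, ((a i).factorial : ℝ) ≤
      (2*n)^d * (δ * (6*B)^d)^2 := by
    calc _ ≤ ∑ a ∈ FF n d, (δ * (6*B)^d)^2 := by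
          refine Finset.sum_le_sum fun a ha => ?_
          rw [div_le_iff₀ (by positivity), mul_comm]
          exact HH_diff a (mem_FF.1 ha) B δ hB hδ X X' hx2 hy hxy
      _ = (FF n d).card * (δ * (6*B)^d)^2 := by simp
      _ ≤ _ := by gcongr
  refine hCS.trans ((mul_le_mul_of_nonneg_left hsum hN0).trans ?_)
  rw [mul_pow 2 (n:ℝ), mul_pow _ ((12*B)^d), mul_pow (δ * √N), mul_pow δ (√N), Real.sq_sqrt hN0, hpow]
  calc _ = δ^2 * N * (n:ℝ)^d * ((6*B)^d)^2 * 2^d := by ring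
    _ ≤ δ^2 * N * (n:ℝ)^d * ((6*B)^d)^2 * (2^d)^2 := by
        gcongr
        exact le_self_pow₀ (one_le_pow₀ (by norm_num)) (by norm_num)
    _ = _ := by rw [show 12*B = 2*(6*B) by ring, mul_pow 2 (6*B)]; ring
end
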